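/- Let G = ⟨X; Rⁿ⟩ be a one-relator group with torsion on a finite generating set X, and let Ĝ = ⟨X; R⟩ be the associated torsion-free one-relator group (the quotient of G by the normal closure of the image of R). Then G admits a decomposition as a free product of two nontrivial groups if and only if Ĝ is infinite cyclic or Ĝ admits a decomposition as a free product of two nontrivial groups. (This is the free-product reformulation, via Stallings' theorem and Fischer–Karrass–Solitar, of the statement: G is infinitely ended if and only if Ĝ is infinitely ended or infinite cyclic; otherwise both G and Ĝ are one-ended.) -/

import Mathlib

/-- A group is *virtually-ℤ* if it has a finite-index subgroup isomorphic to `ℤ`. -/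
def VirtuallyZ (G : Type*) [Group G] : Prop :=
  ∃ H : Subgroup G, H.FiniteIndex ∧ Nonempty (H ≃* Multiplicative ℤ)

/-- A subgroup `M` of `G` is *malnormal* if `g M g⁻¹ ∩ M ≠ 1` implies `g ∈ M`. -/
def Subgroup.IsMalnormal {G : Type*} [Group G] (M : Subgroup G) : Prop :=
  ∀ g : G, (∃ x : G, x ≠ 1 ∧ x ∈ M ∧ g * x * g⁻¹ ∈ M) → g ∈ M

/-- A group is a *free product of cyclic groups* if it is isomorphic to the free product
(`Monoid.CoprodI`) of a family of cyclic groups; every cyclic group is isomorphic to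
`Multiplicative (ZMod m)` for some `m : ℕ` (with `m = 0` giving the infinite cyclic group). -/
def IsFreeProductOfCyclics (G : Type*) [Group G] : Prop :=
  ∃ (ι : Type) (m : ι → ℕ),
    Nonempty (G ≃* Monoid.CoprodI fun i => Multiplicative (ZMod (m i)))

/-- A group is *freely decomposable* if it is isomorphic to a free product of two
nontrivial groups. -/
def FreelyDecomposable (G : Type*) [Group G] : Prop :=
  ∃ (H K : Type) (gH : Group H) (gK : Group K),
    Nontrivial H ∧ Nontrivial K ∧
      Nonempty (G ≃* (letI := gH; letI := gK; Monoid.Coprod H K))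

/-- A group is *freely indecomposable* if it is not isomorphic to a free product of two
nontrivial groups. -/
def FreelyIndecomposable (G : Type*) [Group G] : Prop := ¬ FreelyDecomposable G


namespace ORG

open PowerSeries

section Filt

variable {B : Type} [Ring B]

/-- The units of `B⟦X⟧` congruent to `1` modulo `X ^ i`. -/
def filt (B : Type) [Ring B] (i : ℕ) : Subgroup (B⟦X⟧)ˣ where
  carrier := {u | ∃ m : B⟦X⟧, (u : B⟦X⟧) = 1 + X ^ i * m}
  one_mem' := ⟨0, by simp⟩
  mul_mem' := by
    rintro u v ⟨m, hm⟩ ⟨k, hk⟩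
    refine ⟨m * v + k, ?_⟩
    rw [Units.val_mul, hm, add_mul, one_mul, mul_assoc]
    nth_rewrite 1 [hk]
    rw [mul_add]; abel
  inv_mem' := by
    rintro u ⟨m, hm⟩
    refine ⟨- (m * ((u⁻¹ : (B⟦X⟧)ˣ) : B⟦X⟧)), ?_⟩
    have h : (u : B⟦X⟧) * ((u⁻¹ : (B⟦X⟧)ˣ) : B⟦X⟧) = 1 := u.mul_inv
    rw [hm, add_mul, one_mul] at h
    rw [mul_neg, ← mul_assoc, ← sub_eq_add_neg]
    exact eq_sub_of_add_eq h

theorem mem_filt {i : ℕ} {u : (B⟦X⟧)ˣ} :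
    u ∈ filt B i ↔ ∃ m : B⟦X⟧, (u : B⟦X⟧) = 1 + X ^ i * m := Iff.rfl

instance filt_normal (i : ℕ) : (filt B i).Normal where
  conj_mem := by
    rintro u ⟨m, hm⟩ g
    refine ⟨g * m * ((g⁻¹ : (B⟦X⟧)ˣ) : B⟦X⟧), ?_⟩
    rw [Units.val_mul, Units.val_mul, hm, mul_add, mul_one, add_mul, g.mul_inv]
    rw [← mul_assoc (g : B⟦X⟧), ← X_pow_mul]
    simp only [mul_assoc]

/-- The coefficient of `X ^ i`, used as leading coefficient on `filt B i`. -/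
noncomputable def lead (i : ℕ) (u : (B⟦X⟧)ˣ) : B := coeff i ((u : B⟦X⟧) - 1)

theorem lead_of_eq {i : ℕ} {u : (B⟦X⟧)ˣ} {m : B⟦X⟧} (h : (u : B⟦X⟧) = 1 + X ^ i * m) :
    lead i u = constantCoeff m := by
  have := coeff_X_pow_mul m i 0
  rw [zero_add] at this
  rw [lead, h, add_sub_cancel_left, this, coeff_zero_eq_constantCoeff_apply]

theorem lead_one (i : ℕ) : lead i (1 : (B⟦X⟧)ˣ) = 0 := by simp [lead]

theorem lead_mul {i : ℕ} (hi : 1 ≤ i) {u v : (B⟦X⟧)ˣ} (hu : u ∈ filt B i) (hv : v ∈ filt B i) :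
    lead i (u * v) = lead i u + lead i v := by
  obtain ⟨m, hm⟩ := hu
  obtain ⟨k, hk⟩ := hv
  have h : ((u * v : (B⟦X⟧)ˣ) : B⟦X⟧) = 1 + X ^ i * (m + k + X ^ i * (m * k)) := by
    rw [Units.val_mul, hm, hk]
    have : X ^ i * m * (X ^ i * k) = X ^ i * (X ^ i * (m * k)) := by
      rw [mul_assoc, ← mul_assoc m, ← X_pow_mul, mul_assoc]
    simp only [mul_add, add_mul, this, mul_one, one_mul]; abel
  rw [lead_of_eq h, lead_of_eq hm, lead_of_eq hk]
  have : constantCoeff (X ^ i : B⟦X⟧) = 0 := by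
    rw [map_pow, constantCoeff_X, zero_pow (by omega)]
  simp [this]

theorem constantCoeff_of_mem {i : ℕ} (hi : 1 ≤ i) {u : (B⟦X⟧)ˣ} (hu : u ∈ filt B i) :
    constantCoeff (u : B⟦X⟧) = 1 := by
  obtain ⟨m, hm⟩ := hu
  have : constantCoeff (X ^ i : B⟦X⟧) = 0 := by
    rw [map_pow, constantCoeff_X, zero_pow (by omega)]
  rw [hm]; simp [this]

theorem lead_conj {i : ℕ} {g u : (B⟦X⟧)ˣ} (hg : g ∈ filt B 1)
    (hu : u ∈ filt B i) : lead i (g * u * g⁻¹) = lead i u := by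
  obtain ⟨m, hm⟩ := hu
  have h : ((g * u * g⁻¹ : (B⟦X⟧)ˣ) : B⟦X⟧)
      = 1 + X ^ i * ((g : B⟦X⟧) * m * ((g⁻¹ : (B⟦X⟧)ˣ) : B⟦X⟧)) := by
    rw [Units.val_mul, Units.val_mul, hm, mul_add, mul_one, add_mul, g.mul_inv]
    rw [← mul_assoc (g : B⟦X⟧), ← X_pow_mul]
    simp only [mul_assoc]
  rw [lead_of_eq h, lead_of_eq hm, map_mul, map_mul, constantCoeff_of_mem le_rfl hg,
    constantCoeff_of_mem le_rfl (inv_mem hg)]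
  simp

theorem filt_succ_le (i : ℕ) : filt B (i + 1) ≤ filt B i := by
  rintro u ⟨m, hm⟩
  exact ⟨X * m, by rw [hm, pow_succ, mul_assoc]⟩

theorem mem_filt_succ {i : ℕ} {u : (B⟦X⟧)ˣ} (hu : u ∈ filt B i) (h : lead i u = 0) :
    u ∈ filt B (i + 1) := by
  obtain ⟨m, hm⟩ := hu
  rw [lead_of_eq hm] at h
  obtain ⟨k, rfl⟩ := X_dvd_iff.2 h
  exact ⟨k, by rw [hm, pow_succ, mul_assoc]⟩

theorem lead_eq_zero {i : ℕ} {u : (B⟦X⟧)ˣ} (hu : u ∈ filt B (i + 1)) : lead i u = 0 := by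
  obtain ⟨m, hm⟩ := hu
  rw [pow_succ, mul_assoc] at hm
  rw [lead_of_eq hm]; simp

theorem exists_lead {i : ℕ} (hi : 1 ≤ i) (b : B) : ∃ u ∈ filt B i, lead i u = b := by
  have hc : constantCoeff (1 + X ^ i * C b : B⟦X⟧) = ((1 : Bˣ) : B) := by
    have : constantCoeff (X ^ i : B⟦X⟧) = 0 := by
      rw [map_pow, constantCoeff_X, zero_pow (by omega)]
    simp [this]
  let u : (B⟦X⟧)ˣ := ⟨1 + X ^ i * C b, invOfUnit (1 + X ^ i * C b) 1,
    mul_invOfUnit _ _ hc, invOfUnit_mul _ _ hc⟩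
  have hu : (u : B⟦X⟧) = 1 + X ^ i * C b := rfl
  exact ⟨u, ⟨_, hu⟩, by rw [lead_of_eq hu]; simp⟩

/-- Elements of `filt B 1` commute with elements of `filt B i` modulo `filt B (i+1)`. -/
theorem comm_mem {i : ℕ} (hi : 1 ≤ i) {g u : (B⟦X⟧)ˣ} (hg : g ∈ filt B 1) (hu : u ∈ filt B i) :
    g * u * g⁻¹ * u⁻¹ ∈ filt B (i + 1) := by
  have h1 : g * u * g⁻¹ ∈ filt B i := (filt_normal i).conj_mem u hu g
  refine mem_filt_succ (mul_mem h1 (inv_mem hu)) ?_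
  rw [lead_mul hi h1 (inv_mem hu), lead_conj hg hu, ← lead_mul hi hu (inv_mem hu),
    mul_inv_cancel, lead_one]

end Filt

section Magnus

variable {Y : Type}

open Classical in
/-- `N y` prepends the letter `y`, unless the word already begins with `y`. -/
noncomputable def nop (y : Y) : Module.End ℚ (List Y →₀ ℚ) :=
  Finsupp.lift (List Y →₀ ℚ) ℚ (List Y)
    (fun l => if l.head? = some y then 0 else Finsupp.single (y :: l) 1)

theorem nop_single_of_ne (y : Y) (l : List Y) (h : l.head? ≠ some y) (q : ℚ) :
    nop y (Finsupp.single l q) = Finsupp.single (y :: l) q := by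
  simp [nop, h]

theorem nop_sq (y : Y) : nop y * nop y = 0 := by
  refine Finsupp.lhom_ext fun l q => ?_
  by_cases h : l.head? = some y <;> simp [nop, h]

/-- The ring of operators. -/
abbrev Op (Y : Type) : Type := Module.End ℚ (List Y →₀ ℚ)

theorem nop_mul_zero (y : Y) (z z' : ℤ) :
    (X * C (z • nop y) : (Op Y)⟦X⟧) * (X * C (z' • nop y)) = 0 := by
  have h : (z • nop y) * (z' • nop y) = 0 := by
    rw [smul_mul_assoc, mul_smul_comm, nop_sq, smul_zero, smul_zero]
  rw [mul_assoc, ← mul_assoc (C _), (commute_X _).eq, mul_assoc, ← map_mul, h, map_zero,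
    mul_zero, mul_zero]

theorem nop_add (y : Y) (z z' : ℤ) :
    (1 + X * C (z • nop y) : (Op Y)⟦X⟧) * (1 + X * C (z' • nop y)) =
      1 + X * C ((z + z') • nop y) := by
  rw [mul_add, add_mul, add_mul, nop_mul_zero, add_smul, map_add, mul_add, mul_one, one_mul,
    mul_one, add_zero, add_assoc]

/-- The unit `1 + z X N_y`. -/
noncomputable def mag (y : Y) (z : ℤ) : ((Op Y)⟦X⟧)ˣ where
  val := 1 + X * C (z • nop y)
  inv := 1 + X * C ((-z) • nop y)
  val_inv := by
    rw [nop_add, add_neg_cancel, zero_smul, map_zero, mul_zero, add_zero]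
  inv_val := by
    rw [nop_add, neg_add_cancel, zero_smul, map_zero, mul_zero, add_zero]

theorem mag_add (y : Y) (z z' : ℤ) : mag y (z + z') = mag y z * mag y z' := by
  apply Units.ext
  exact (nop_add y z z').symm

/-- Powers of `mag y 1`. -/
noncomputable def magHom (y : Y) : Multiplicative ℤ →* ((Op Y)⟦X⟧)ˣ where
  toFun z := mag y z.toAdd
  map_one' := by apply Units.ext; simp [mag]
  map_mul' a b := mag_add y _ _

theorem mag_zpow (y : Y) (z : ℤ) : mag y 1 ^ z = mag y z := by
  have h := map_zpow (magHom y) (Multiplicative.ofAdd 1) z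
  have : (Multiplicative.ofAdd (1 : ℤ)) ^ z = Multiplicative.ofAdd z := by
    rw [← ofAdd_zsmul]; simp
  rw [this] at h
  exact h.symm

/-- The Magnus representation. -/
noncomputable def magnus (Y : Type) : FreeGroup Y →* ((Op Y)⟦X⟧)ˣ :=
  FreeGroup.lift fun y => mag y 1

theorem magnus_mem (w : FreeGroup Y) : magnus Y w ∈ filt (Op Y) 1 := by
  induction w using FreeGroup.induction_on with
  | C1 => rw [map_one]; exact one_mem _
  | of y => exact ⟨C ((1 : ℤ) • nop y), by simp [magnus, mag]⟩
  | inv_of y h => rw [map_inv]; exact inv_mem h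
  | mul a b ha hb => rw [map_mul]; exact mul_mem ha hb

/-- Leading term of alternating products. -/
theorem mag_list (l : List (Y × ℤ)) (h0 : ∀ p ∈ l, p.2 ≠ 0)
    (hc : l.IsChain fun p q => p.1 ≠ q.1) :
    (∀ j, l.length < j → coeff j (((l.map fun p => mag p.1 p.2).prod : ((Op Y)⟦X⟧)ˣ) :
        (Op Y)⟦X⟧) = 0) ∧
    ∃ q : ℚ, q ≠ 0 ∧ coeff l.length (((l.map fun p => mag p.1 p.2).prod : ((Op Y)⟦X⟧)ˣ) :
        (Op Y)⟦X⟧) (Finsupp.single [] 1) = Finsupp.single (l.map Prod.fst) q := by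
  induction l with
  | nil =>
    refine ⟨fun j hj => ?_, 1, one_ne_zero, ?_⟩
    · simp only [List.map_nil, List.prod_nil, Units.val_one]
      rw [coeff_one, if_neg (by simp at hj; omega)]
    · simp
  | cons p l ih =>
    obtain ⟨ih1, q, hq, ih2⟩ := ih (fun r hr => h0 r (List.mem_cons_of_mem _ hr))
      hc.of_cons
    have hco : ∀ j, coeff (j + 1) ((((p :: l).map fun p => mag p.1 p.2).prod :
        ((Op Y)⟦X⟧)ˣ) : (Op Y)⟦X⟧) =
        coeff (j + 1) (((l.map fun p => mag p.1 p.2).prod : ((Op Y)⟦X⟧)ˣ) : (Op Y)⟦X⟧) +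
        (p.2 • nop p.1) * coeff j (((l.map fun p => mag p.1 p.2).prod : ((Op Y)⟦X⟧)ˣ) :
        (Op Y)⟦X⟧) := by
      intro j
      rw [List.map_cons, List.prod_cons, Units.val_mul]
      change coeff (j + 1) ((1 + X * C (p.2 • nop p.1)) * _) = _
      rw [add_mul, one_mul, map_add, mul_assoc, coeff_succ_X_mul, coeff_C_mul]
    refine ⟨fun j hj => ?_, p.2 * q, ?_, ?_⟩
    · obtain ⟨j, rfl⟩ : ∃ k, j = k + 1 := ⟨j - 1, by omega⟩
      simp only [List.length_cons] at hj
      rw [hco, ih1 _ (by omega), ih1 _ (by omega)]; simp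
    · exact mul_ne_zero (by exact_mod_cast h0 p (by simp)) hq
    · rw [List.length_cons, hco, ih1 _ (by omega), zero_add, Module.End.mul_apply, ih2,
        LinearMap.smul_apply, nop_single_of_ne]
      · simp
      · intro hh
        cases l with
        | nil => simp at hh
        | cons r l =>
          simp at hh
          rw [List.isChain_cons_cons] at hc
          exact hc.1 hh.symm

theorem magnus_ne (w : FreeGroup Y) (hw : w ≠ 1) : ∃ c, magnus Y w ∉ filt (Op Y) c := by
  classical
  let W := Monoid.CoprodI.Word.equiv (freeGroupEquivCoprodI w)
  have hW : W.prod = freeGroupEquivCoprodI w := Monoid.CoprodI.Word.equiv.left_inv _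
  let g : (Σ _ : Y, FreeGroup Unit) → Y × ℤ :=
    fun s => (s.1, FreeGroup.freeGroupUnitEquivInt s.2)
  let l := W.toList.map g
  have key : magnus Y w = (l.map fun p => mag p.1 p.2).prod := by
    have h1 : ((Monoid.CoprodI.lift fun i => FreeGroup.lift fun _ => mag i 1).comp
        (freeGroupEquivCoprodI (ι := Y)).toMonoidHom : FreeGroup Y →* ((Op Y)⟦X⟧)ˣ)
        = magnus Y := by
      ext i
      simp [magnus, freeGroupEquivCoprodI]
    rw [← h1, MonoidHom.comp_apply]
    change (Monoid.CoprodI.lift fun i => FreeGroup.lift fun _ => mag i 1)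
      (freeGroupEquivCoprodI w) = _
    rw [← hW, Monoid.CoprodI.Word.prod, map_list_prod, List.map_map, List.map_map]
    congr 1
    apply List.map_congr_left
    rintro ⟨i, m⟩ -
    simp only [Function.comp, Monoid.CoprodI.lift_of]
    obtain ⟨z, rfl⟩ := FreeGroup.freeGroupUnitEquivInt.symm.surjective m
    simp only [g, Equiv.apply_symm_apply]
    change FreeGroup.lift (fun _ => mag i 1) (FreeGroup.of () ^ z) = _
    rw [map_zpow, FreeGroup.lift_apply_of, mag_zpow]
  have hl0 : ∀ p ∈ l, p.2 ≠ 0 := by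
    intro p hp
    obtain ⟨s, hs, rfl⟩ := List.mem_map.1 hp
    intro h
    apply W.ne_one s hs
    have : FreeGroup.freeGroupUnitEquivInt s.2 = FreeGroup.freeGroupUnitEquivInt 1 := by
      rw [show FreeGroup.freeGroupUnitEquivInt s.2 = 0 from h]; rfl
    exact FreeGroup.freeGroupUnitEquivInt.injective this
  have hlc : l.IsChain fun p q => p.1 ≠ q.1 := by
    rw [List.isChain_map]; exact W.chain_ne
  obtain ⟨-, q, hq, h2⟩ := mag_list l hl0 hlc
  refine ⟨l.length + 1, fun hmem => ?_⟩
  have h3 := lead_eq_zero hmem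
  rw [key, lead, map_sub] at h3
  have hlen : l.length ≠ 0 := by
    intro h
    apply hw
    have : W.toList = [] := by simpa [l] using h
    have h4 : W.prod = 1 := by rw [Monoid.CoprodI.Word.prod, this]; simp
    rw [hW] at h4
    exact freeGroupEquivCoprodI.injective (by rw [h4, map_one])
  rw [coeff_one, if_neg hlen, sub_zero] at h3
  rw [h3] at h2
  have := congrArg (fun f => f (l.map Prod.fst)) h2
  simp at this
  exact hq this.symm

end Magnus

/-- A nontrivial normal subgroup of a subgroup of a free group carries a nontrivial
conjugation-invariant homomorphism to the rationals. -/
theorem exists_inv_hom {Q Y : Type} [Group Q] (j : Q →* FreeGroup Y)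
    (hj : Function.Injective j) (N : Subgroup Q) (hN : N.Normal) (hN1 : N ≠ ⊥) :
    ∃ c : Q → ℚ, (∀ x ∈ N, ∀ y ∈ N, c (x * y) = c x + c y) ∧
      (∀ g, ∀ x ∈ N, c (g * x * g⁻¹) = c x) ∧ ∃ x ∈ N, c x ≠ 0 := by
  classical
  obtain ⟨w, hwN, hw1⟩ : ∃ w ∈ N, w ≠ 1 := by
    by_contra! h
    exact hN1 ((Subgroup.eq_bot_iff_forall N).2 h)
  let ρ : Q →* ((Op Y)⟦X⟧)ˣ := (magnus Y).comp j
  have hex : ∃ i, ¬ ∀ x ∈ N, ρ x ∈ filt (Op Y) i := by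
    obtain ⟨c, hc⟩ := magnus_ne (j w) (fun h => hw1 (hj (by rw [h, map_one])))
    exact ⟨c, fun h => hc (h w hwN)⟩
  have h1 := Nat.find_spec hex
  have h2 : ∀ k < Nat.find hex, ∀ x ∈ N, ρ x ∈ filt (Op Y) k :=
    fun k hk => not_not.1 (Nat.find_min hex hk)
  obtain ⟨i, hi⟩ : ∃ i, Nat.find hex = i + 2 := by
    refine ⟨Nat.find hex - 2, ?_⟩
    have h3 : Nat.find hex ≠ 0 := fun h => h1 (fun x _ => by
      rw [h]; exact ⟨ρ x - 1, by simp⟩)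
    have h4 : Nat.find hex ≠ 1 := fun h => h1 (fun x _ => by
      rw [h]; exact magnus_mem _)
    omega
  rw [hi] at h1 h2
  have hNi := h2 (i + 1) (by omega)
  push Not at h1
  obtain ⟨x, hx, hxn⟩ := h1
  have hl : lead (i + 1) (ρ x) ≠ 0 := fun h => hxn (mem_filt_succ (hNi x hx) h)
  obtain ⟨v, hv⟩ : ∃ v, lead (i + 1) (ρ x) v ≠ 0 := by
    by_contra! h
    exact hl (LinearMap.ext h)
  obtain ⟨a, ha⟩ : ∃ a, lead (i + 1) (ρ x) v a ≠ 0 := by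
    by_contra! h
    exact hv (Finsupp.ext h)
  refine ⟨fun y => lead (i + 1) (ρ y) v a, ?_, ?_, x, hx, ha⟩
  · intro y hy z hz
    simp only [map_mul]
    rw [lead_mul (by omega) (hNi y hy) (hNi z hz)]; rfl
  · intro g y hy
    simp only [map_mul, map_inv]
    rw [lead_conj (show ρ g ∈ _ from magnus_mem _) (hNi y hy)]

/-- Solving equations with non-zero exponent sum modulo each step of the filtration. -/
theorem solve_step {T : Type} (R : FreeGroup (Option T)) (σ : FreeGroup (Option T) →* Multiplicative ℤ)
    (hσ0 : σ (FreeGroup.of none) = Multiplicative.ofAdd 1)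
    (hσ1 : ∀ y, σ (FreeGroup.of (some y)) = 1)
    (hR : (σ R).toAdd ≠ 0) (c : ℕ) :
    ∃ f : FreeGroup (Option T) →* ((Op T)⟦X⟧)ˣ, (∀ w, f w ∈ filt (Op T) 1) ∧
      (∀ y, f (FreeGroup.of (some y)) = mag y 1) ∧ f R ∈ filt (Op T) (c + 1) := by
  induction c with
  | zero =>
    let f : FreeGroup (Option T) →* ((Op T)⟦X⟧)ˣ :=
      FreeGroup.lift fun o => o.elim 1 (fun y => mag y 1)
    have hf : ∀ w, f w ∈ filt (Op T) 1 := by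
      intro w
      induction w using FreeGroup.induction_on with
      | C1 => rw [map_one]; exact one_mem _
      | of y =>
        cases y with
        | none => simp [f, one_mem]
        | some y => exact ⟨C ((1 : ℤ) • nop y), by simp [f, mag]⟩
      | inv_of y h => rw [map_inv]; exact inv_mem h
      | mul a b ha hb => rw [map_mul]; exact mul_mem ha hb
    exact ⟨f, hf, fun y => by simp [f], hf R⟩
  | succ c ih =>
    obtain ⟨f, hf1, hf2, hf3⟩ := ih
    obtain ⟨z, hz, hzl⟩ := exists_lead (B := Op T) (i := c + 1) (by omega)
      ((-((σ R).toAdd : ℚ)⁻¹) • lead (c + 1) (f R))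
    have hz1 : z ∈ filt (Op T) 1 := by
      obtain ⟨m, hm⟩ := hz
      exact ⟨X ^ c * m, by rw [hm, pow_succ', pow_one, mul_assoc]⟩
    let f' : FreeGroup (Option T) →* ((Op T)⟦X⟧)ˣ :=
      FreeGroup.lift fun o => o.elim (f (FreeGroup.of none) * z) (fun y => mag y 1)
    have hz' : ∀ e : ℤ, z ^ e ∈ filt (Op T) (c + 1) := fun e => zpow_mem hz e
    -- comparison modulo the next step
    have hcomp : ∀ w, f' w * (f w * z ^ (σ w).toAdd)⁻¹ ∈ filt (Op T) (c + 2) := by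
      let q := QuotientGroup.mk' (filt (Op T) (c + 2))
      have hcen : ∀ w (e : ℤ), q (z ^ e) * q (f w) = q (f w) * q (z ^ e) := by
        intro w e
        rw [← map_mul, ← map_mul]
        symm
        apply QuotientGroup.eq.2
        have := comm_mem (i := c + 1) (by omega) (inv_mem (hf1 w)) (inv_mem (hz' e))
        have h2 := (filt_normal (B := Op T) (c + 2)).conj_mem _ this 1
        have h3 : (f w * z ^ e)⁻¹ * (z ^ e * f w) =
          (z ^ e)⁻¹ * ((f w)⁻¹ * (z ^ e) * (f w)⁻¹⁻¹ * (z ^ e)⁻¹) * (z ^ e)⁻¹⁻¹ := by group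
        rw [h3]
        apply (filt_normal (B := Op T) (c + 2)).conj_mem
        exact comm_mem (i := c + 1) (by omega) (inv_mem (hf1 w)) (hz' e)
      let F : FreeGroup (Option T) →* _ :=
        { toFun := fun w => q (f w) * q (z ^ (σ w).toAdd)
          map_one' := by simp
          map_mul' := by
            intro a b
            rw [map_mul, map_mul, map_mul, toAdd_mul, zpow_add, map_mul]
            rw [mul_assoc, mul_assoc]
            congr 1
            rw [← mul_assoc, ← mul_assoc, hcen] }
      have hF : q.comp f' = F := by
        apply FreeGroup.ext_hom
        intro o
        cases o with
        | none =>
          simp only [MonoidHom.comp_apply]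
          change q (f' _) = q (f _) * q (z ^ _)
          rw [hσ0]
          simp [f']
        | some y =>
          simp only [MonoidHom.comp_apply]
          change q (f' _) = q (f _) * q (z ^ _)
          rw [hσ1, hf2]
          simp [f']
      intro w
      have h := DFunLike.congr_fun hF w
      change q (f' w) = q (f w) * q (z ^ (σ w).toAdd) at h
      rw [← map_mul] at h
      have h2 := QuotientGroup.eq.1 h.symm
      have h3 := (filt_normal (B := Op T) (c + 2)).conj_mem _ h2 (f w * z ^ (σ w).toAdd)
      simpa [mul_assoc] using h3
    refine ⟨f', ?_, fun y => by simp [f'], ?_⟩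
    · intro w
      have h := hcomp w
      have h' : f' w * (f w * z ^ (σ w).toAdd)⁻¹ ∈ filt (Op T) 1 := by
        obtain ⟨m, hm⟩ := h
        exact ⟨X ^ (c + 1) * m, by rw [hm, pow_one, ← mul_assoc, ← pow_succ']⟩
      have := mul_mem h' (mul_mem (hf1 w) (zpow_mem hz1 (σ w).toAdd))
      rwa [inv_mul_cancel_right] at this
    · have h4 : f R * z ^ (σ R).toAdd ∈ filt (Op T) (c + 1) := mul_mem hf3 (hz' _)
      have h5 : f R * z ^ (σ R).toAdd ∈ filt (Op T) (c + 2) := by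
        refine mem_filt_succ h4 ?_
        let L : filt (Op T) (c + 1) →* Multiplicative (Op T) :=
          { toFun := fun u => Multiplicative.ofAdd (lead (c + 1) (u : ((Op T)⟦X⟧)ˣ))
            map_one' := by simp [lead_one]
            map_mul' := fun u v => by
              rw [Subgroup.coe_mul, lead_mul (by omega) u.2 v.2]; rfl }
        have h6 := congrArg Multiplicative.toAdd (map_zpow L ⟨z, hz⟩ (σ R).toAdd)
        change lead (c + 1) (z ^ (σ R).toAdd) = (σ R).toAdd • lead (c + 1) z at h6
        rw [lead_mul (by omega) hf3 (hz' _), h6, hzl, ← Int.cast_smul_eq_zsmul ℚ, smul_smul]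
        have hne : ((σ R).toAdd : ℚ) ≠ 0 := by exact_mod_cast hR
        rw [mul_neg, mul_inv_cancel₀ hne]
        simp
      have := mul_mem (hcomp R) h5
      rwa [inv_mul_cancel_right] at this

/-- The Freiheitssatz when the exponent sum of the omitted generator does not vanish. -/
theorem freiheit_nonzero {T : Type} (R : FreeGroup (Option T))
    (σ : FreeGroup (Option T) →* Multiplicative ℤ)
    (hσ0 : σ (FreeGroup.of none) = Multiplicative.ofAdd 1)
    (hσ1 : ∀ y, σ (FreeGroup.of (some y)) = 1)
    (hR : (σ R).toAdd ≠ 0) (w : FreeGroup T)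
    (hw : FreeGroup.map some w ∈ Subgroup.normalClosure {R}) : w = 1 := by
  by_contra hne
  obtain ⟨c, hc⟩ := magnus_ne w hne
  obtain ⟨f, -, hf2, hf3⟩ := solve_step R σ hσ0 hσ1 hR c
  have h1 : Subgroup.normalClosure {R} ≤ (filt (Op T) (c + 1)).comap f := by
    apply Subgroup.normalClosure_le_normal
    simpa using hf3
  have h2 : f.comp (FreeGroup.map some) = magnus T := by
    apply FreeGroup.ext_hom
    intro y
    simp [hf2, magnus]
  have h3 : f (FreeGroup.map some w) ∈ filt (Op T) (c + 1) := h1 hw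
  rw [← MonoidHom.comp_apply, h2] at h3
  exact hc (filt_succ_le c h3)

end ORG

namespace ORG

def ConjIn {T X : Type} (f : T → X) (R : FreeGroup X) : Prop :=
  ∃ (g : FreeGroup X) (u : FreeGroup T), R = g * FreeGroup.map f u * g⁻¹

def HasLen {X : Type} (R : FreeGroup X) (n : ℕ) : Prop :=
  ∃ L : List (X × Bool), FreeGroup.mk L = R ∧ L.length ≤ n

def FreiInj (n : ℕ) : Prop :=
  ∀ (T X : Type) (f : T → X), Function.Injective f → ∀ R : FreeGroup X, HasLen R n →
    ¬ ConjIn f R → ∀ w : FreeGroup T, FreeGroup.map f w ∈ Subgroup.normalClosure {R} → w = 1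

def FreiOpt (n : ℕ) : Prop :=
  ∀ (Y : Type) (R : FreeGroup (Option Y)), HasLen R n →
    ¬ ConjIn (some : Y → Option Y) R → ∀ w : FreeGroup Y,
      FreeGroup.map some w ∈ Subgroup.normalClosure {R} → w = 1

theorem mk_cons {X : Type} (p : X × Bool) (L : List (X × Bool)) :
    FreeGroup.mk (p :: L) = FreeGroup.mk [p] * FreeGroup.mk L := by
  rw [FreeGroup.mul_mk]; rfl

theorem mk_single_true {X : Type} (x : X) : FreeGroup.mk [(x, true)] = FreeGroup.of x := rfl

theorem mk_single_false {X : Type} (x : X) :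
    FreeGroup.mk [(x, false)] = (FreeGroup.of x)⁻¹ := rfl

theorem HasLen.lift {X Z : Type} {R : FreeGroup X} {n : ℕ} (h : HasLen R n)
    (g : X → FreeGroup Z) (hg : ∀ x, g x = 1 ∨ ∃ z, g x = FreeGroup.of z) :
    HasLen (FreeGroup.lift g R) n := by
  obtain ⟨L, rfl, hL⟩ := h
  suffices ∃ L' : List (Z × Bool), FreeGroup.mk L' = FreeGroup.lift g (FreeGroup.mk L) ∧
      L'.length ≤ L.length by
    obtain ⟨L', h1, h2⟩ := this
    exact ⟨L', h1, h2.trans hL⟩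
  clear hL
  induction L with
  | nil => exact ⟨[], by simp [← FreeGroup.one_eq_mk], le_refl _⟩
  | cons p L ih =>
    obtain ⟨L', h1, h2⟩ := ih
    obtain ⟨x, b⟩ := p
    rw [mk_cons, map_mul, ← h1]
    rcases hg x with hx | ⟨z, hz⟩
    · refine ⟨L', ?_, by simp; omega⟩
      cases b
      · rw [mk_single_false]; simp [hx]
      · rw [mk_single_true]; simp [hx]
    · refine ⟨(z, b) :: L', ?_, by simpa using h2⟩
      rw [mk_cons]
      cases b
      · rw [mk_single_false]; simp [hz, mk_single_false]
      · rw [mk_single_true]; simp [hz, mk_single_true]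

theorem HasLen.map {X Z : Type} {R : FreeGroup X} {n : ℕ} (h : HasLen R n) (f : X → Z) :
    HasLen (FreeGroup.map f R) n := by
  have := h.lift (fun x => FreeGroup.of (f x)) (fun x => Or.inr ⟨_, rfl⟩)
  have e : FreeGroup.map f = FreeGroup.lift (fun x => FreeGroup.of (f x)) := by
    apply FreeGroup.ext_hom; intro x; simp
  rw [e]; exact this

open Classical in
noncomputable def kill {X : Type} (S : Set X) : FreeGroup X →* FreeGroup X :=
  FreeGroup.lift (fun x => if x ∈ S then 1 else FreeGroup.of x)

theorem kill_of_mem {X : Type} {S : Set X} {x : X} (h : x ∈ S) :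
    kill S (FreeGroup.of x) = 1 := by simp [kill, h]

theorem kill_of_notMem {X : Type} {S : Set X} {x : X} (h : x ∉ S) :
    kill S (FreeGroup.of x) = FreeGroup.of x := by simp [kill, h]

theorem kill_map {T X : Type} (S : Set X) (f : T → X) (hf : ∀ t, f t ∉ S) (u : FreeGroup T) :
    kill S (FreeGroup.map f u) = FreeGroup.map f u := by
  have : (kill S).comp (FreeGroup.map f) = FreeGroup.map f := by
    apply FreeGroup.ext_hom; intro t
    simp [kill_of_notMem (hf t)]
  exact DFunLike.congr_fun this u

theorem kill_insert {X : Type} (S : Set X) (x : X) (u : FreeGroup X) :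
    kill (insert x S) u = kill {x} (kill S u) := by
  have : (kill {x}).comp (kill S) = kill (insert x S) := by
    apply FreeGroup.ext_hom; intro t
    by_cases h : t ∈ S
    · simp [kill_of_mem h, kill_of_mem (Set.mem_insert_of_mem x h)]
    · by_cases h2 : t = x
      · subst h2
        simp [kill_of_notMem h, kill_of_mem (Set.mem_insert t S), kill_of_mem (Set.mem_singleton t)]
      · have h3 : t ∉ insert x S := by simp [h, h2]
        have h4 : t ∉ ({x} : Set X) := by simp [h2]
        simp [kill_of_notMem h, kill_of_notMem h3, kill_of_notMem h4]
  exact (DFunLike.congr_fun this u).symm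

theorem kill_mem_range {T X : Type} (f : T → X) (S : Set X) (L : List (X × Bool))
    (h : ∀ p ∈ L, p.1 ∈ S ∨ p.1 ∈ Set.range f) :
    ∃ u, kill S (FreeGroup.mk L) = FreeGroup.map f u := by
  induction L with
  | nil => exact ⟨1, by simp [← FreeGroup.one_eq_mk]⟩
  | cons p L ih =>
    obtain ⟨u, hu⟩ := ih (fun q hq => h q (List.mem_cons_of_mem _ hq))
    have : ∃ v, kill S (FreeGroup.of p.1) = FreeGroup.map f v := by
      by_cases hS : p.1 ∈ S
      · exact ⟨1, by simp [kill_of_mem hS]⟩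
      · obtain ⟨t, ht⟩ := (h p List.mem_cons_self).resolve_left hS
        exact ⟨FreeGroup.of t, by simp [kill_of_notMem hS, ht]⟩
    obtain ⟨v, hv⟩ := this
    obtain ⟨x, b⟩ := p
    cases b
    · exact ⟨v⁻¹ * u, by rw [mk_cons, map_mul, hu, mk_single_false, map_inv, hv]; simp⟩
    · exact ⟨v * u, by rw [mk_cons, map_mul, hu, mk_single_true, hv]; simp⟩

theorem exists_letter {T X : Type} (f : T → X) (R : FreeGroup X) (hR : ¬ ConjIn f R) :
    ∃ x, x ∉ Set.range f ∧ ¬ ConjIn (Subtype.val : {y // y ≠ x} → X) R := by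
  by_contra hcon
  push Not at hcon
  have key : ∀ S : Set X, S.Finite → (∀ x ∈ S, x ∉ Set.range f) → ∃ g, R = g * kill S R * g⁻¹ := by
    intro S hS
    induction S, hS using Set.Finite.induction_on with
    | empty =>
      intro _
      refine ⟨1, ?_⟩
      have : kill (∅ : Set X) = MonoidHom.id _ := by
        apply FreeGroup.ext_hom; intro t; simp [kill]
      simp [this]
    | insert hx hS ih =>
      rename_i x S
      intro h
      obtain ⟨g, hg⟩ := ih (fun y hy => h y (Set.mem_insert_of_mem _ hy))
      obtain ⟨g2, u, hu⟩ := hcon x (h x (Set.mem_insert _ _))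
      have e1 : kill {x} R = kill {x} g2 * FreeGroup.map Subtype.val u * (kill {x} g2)⁻¹ := by
        conv_lhs => rw [hu]
        rw [map_mul, map_mul, map_inv, kill_map]
        intro t; exact t.2
      have e2 : kill {x} R = kill {x} g * kill (insert x S) R * (kill {x} g)⁻¹ := by
        conv_lhs => rw [hg]
        rw [map_mul, map_mul, map_inv, kill_insert]
      refine ⟨g2 * (kill {x} g2)⁻¹ * kill {x} g, ?_⟩
      rw [e1] at e2
      have e3 : FreeGroup.map Subtype.val u = (kill {x} g2)⁻¹ *
          (kill {x} g * kill (insert x S) R * (kill {x} g)⁻¹) * kill {x} g2 := by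
        rw [← e2]; group
      rw [e3] at hu
      conv_lhs => rw [hu]
      group
  obtain ⟨L, hL⟩ := Quot.exists_rep R
  change FreeGroup.mk L = R at hL
  classical
  obtain ⟨g, hg⟩ := key {x | x ∈ L.map Prod.fst ∧ x ∉ Set.range f}
    ((List.finite_toSet (L.map Prod.fst)).subset (fun x hx => hx.1)) (fun x hx => hx.2)
  obtain ⟨u, hu⟩ := kill_mem_range f {x | x ∈ L.map Prod.fst ∧ x ∉ Set.range f} L (by
    intro p hp
    by_cases h : p.1 ∈ Set.range f
    · exact Or.inr h
    · exact Or.inl ⟨List.mem_map_of_mem hp, h⟩)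
  rw [hL] at hu
  exact hR ⟨g, u, by rw [← hu]; exact hg⟩

theorem map_mem_normalClosure {G H : Type} [Group G] [Group H] (f : G →* H) {r w : G}
    (h : w ∈ Subgroup.normalClosure {r}) : f w ∈ Subgroup.normalClosure {f r} := by
  have : Subgroup.normalClosure {r} ≤ (Subgroup.normalClosure {f r}).comap f := by
    apply Subgroup.normalClosure_le_normal
    rintro _ rfl
    exact Subgroup.subset_normalClosure rfl
  exact this h

theorem freiInj_of_opt {n : ℕ} (h : FreiOpt n) : FreiInj n := by
  intro T X f hf R hlen hR w hw
  obtain ⟨x, hx, hxR⟩ := exists_letter f R hR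
  classical
  let e := Equiv.optionSubtypeNe x
  have he : ∀ y : {y // y ≠ x}, e.symm y.1 = some y := by
    intro y; rw [Equiv.symm_apply_eq]; simp [e]
  let f' : T → {y // y ≠ x} := fun t => ⟨f t, fun h => hx ⟨t, h⟩⟩
  have hf' : Function.Injective f' := fun a b hab => hf (congrArg Subtype.val hab)
  have h1 := h {y // y ≠ x} (FreeGroup.map e.symm R) (hlen.map _) (by
    rintro ⟨g, u, hu⟩
    apply hxR
    refine ⟨FreeGroup.map e g, u, ?_⟩
    have := congrArg (FreeGroup.map e) hu
    rw [FreeGroup.map.comp, map_mul, map_mul, map_inv, FreeGroup.map.comp] at this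
    simp only [Equiv.self_comp_symm, FreeGroup.map.id] at this
    rw [this]
    congr 3) (FreeGroup.map f' w) (by
    have := map_mem_normalClosure (FreeGroup.map e.symm) hw
    convert this using 1
    rw [FreeGroup.map.comp, FreeGroup.map.comp]
    congr 2
    funext t
    exact (he (f' t)).symm)
  exact FreeGroup.map_injective hf' (by rw [h1, map_one])

end ORG

namespace ORG

def rwl {Y : Type} : List (Option Y × Bool) → ℤ → List ((Y × ℤ) × Bool)
  | [], _ => []
  | (none, true) :: L, k => rwl L (k + 1)
  | (none, false) :: L, k => rwl L (k - 1)
  | (some y, b) :: L, k => ((y, k), b) :: rwl L k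

def sig (Y : Type) : FreeGroup (Option Y) →* Multiplicative ℤ :=
  FreeGroup.lift (fun o => Option.elim o (Multiplicative.ofAdd 1) (fun _ => 1))

def unfoldHom (Y : Type) : FreeGroup (Y × ℤ) →* FreeGroup (Option Y) :=
  FreeGroup.lift (fun p => FreeGroup.of none ^ p.2 * FreeGroup.of (some p.1) *
    (FreeGroup.of none ^ p.2)⁻¹)

theorem rwl_spec {Y : Type} (L : List (Option Y × Bool)) (k : ℤ) :
    FreeGroup.of none ^ k * FreeGroup.mk L = unfoldHom Y (FreeGroup.mk (rwl L k)) *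
      FreeGroup.of none ^ (k + (sig Y (FreeGroup.mk L)).toAdd) := by
  induction L generalizing k with
  | nil => simp [rwl, ← FreeGroup.one_eq_mk]
  | cons p L ih =>
    obtain ⟨o, b⟩ := p
    rcases o with _ | y
    · cases b
      · have := ih (k - 1)
        rw [mk_cons, mk_single_false, map_mul, map_inv, ← mul_assoc]
        rw [zpow_sub_one] at this
        rw [this]
        simp only [rwl, sig, FreeGroup.lift_apply_of, Option.elim, toAdd_mul, toAdd_inv, toAdd_ofAdd]
        congr 2; ring
      · have := ih (k + 1)
        rw [mk_cons, mk_single_true, map_mul, ← mul_assoc]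
        rw [zpow_add_one] at this
        rw [this]
        simp only [rwl, sig, FreeGroup.lift_apply_of, Option.elim, toAdd_mul, toAdd_ofAdd]
        congr 2; ring
    · have := ih k
      cases b
      · rw [mk_cons, mk_single_false, map_mul, map_inv]
        simp only [rwl]
        rw [mk_cons, mk_single_false, map_mul, map_inv, mul_assoc]
        simp only [sig, FreeGroup.lift_apply_of, Option.elim, inv_one, one_mul] at this ⊢
        rw [← this]
        simp only [unfoldHom, FreeGroup.lift_apply_of]; group
      · rw [mk_cons, mk_single_true, map_mul]
        simp only [rwl]
        rw [mk_cons, mk_single_true, map_mul, mul_assoc]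
        simp only [sig, FreeGroup.lift_apply_of, Option.elim, one_mul] at this ⊢
        rw [← this]
        simp only [unfoldHom, FreeGroup.lift_apply_of]; group

theorem rwl_length {Y : Type} (L : List (Option Y × Bool)) (k : ℤ) :
    (rwl L k).length ≤ L.length := by
  induction L generalizing k with
  | nil => simp [rwl]
  | cons p L ih =>
    obtain ⟨o, b⟩ := p
    rcases o with _ | y
    · cases b
      · have := ih (k - 1); simp [rwl]; omega
      · have := ih (k + 1); simp [rwl]; omega
    · have := ih k; simp [rwl]; omega

theorem rwl_length_lt {Y : Type} (L : List (Option Y × Bool)) (k : ℤ)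
    (h : none ∈ L.map Prod.fst) : (rwl L k).length < L.length := by
  induction L generalizing k with
  | nil => simp at h
  | cons p L ih =>
    obtain ⟨o, b⟩ := p
    rcases o with _ | y
    · cases b
      · have := rwl_length L (k - 1); simp [rwl]; omega
      · have := rwl_length L (k + 1); simp [rwl]; omega
    · have := ih k (by simpa using h); simp [rwl]; omega

theorem kill_empty {X : Type} (u : FreeGroup X) : kill (∅ : Set X) u = u := by
  have : kill (∅ : Set X) = MonoidHom.id _ := by
    apply FreeGroup.ext_hom; intro t; simp [kill]
  simp [this]

theorem exists_retract {T X : Type} (f : T → X) (hf : Function.Injective f) {R : FreeGroup X}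
    {n : ℕ} (hl : HasLen R n) (hc : ConjIn f R) :
    ∃ R', HasLen R' n ∧ ∃ g, R = g * FreeGroup.map f R' * g⁻¹ := by
  classical
  let ρ : FreeGroup X →* FreeGroup T :=
    FreeGroup.lift (fun x => if h : ∃ t, f t = x then FreeGroup.of h.choose else 1)
  have hρ : ∀ u, ρ (FreeGroup.map f u) = u := by
    have : ρ.comp (FreeGroup.map f) = MonoidHom.id _ := by
      apply FreeGroup.ext_hom; intro t
      have h : ∃ t', f t' = f t := ⟨t, rfl⟩
      have h2 : h.choose = t := hf h.choose_spec
      simp only [MonoidHom.comp_apply, FreeGroup.map.of, FreeGroup.lift_apply_of, ρ,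
        MonoidHom.id_apply]
      rw [dif_pos h, h2]
    intro u; exact DFunLike.congr_fun this u
  obtain ⟨g, u, hu⟩ := hc
  refine ⟨ρ R, hl.lift _ ?_, g * (FreeGroup.map f (ρ g))⁻¹, ?_⟩
  · intro x
    by_cases h : ∃ t, f t = x
    · exact Or.inr ⟨_, dif_pos h⟩
    · exact Or.inl (dif_neg h)
  · have : ρ R = ρ g * u * (ρ g)⁻¹ := by
      rw [hu, map_mul, map_mul, map_inv, hρ]
    rw [this, map_mul, map_mul, map_inv]
    conv_lhs => rw [hu]
    group

def jmap (Y : Type) (a : ℤ) (k : ℕ) : Y × Fin k → Y × ℤ := fun p => (p.1, a + (p.2 : ℕ))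

theorem jmap_inj (Y : Type) (a : ℤ) (k : ℕ) : Function.Injective (jmap Y a k) := by
  rintro ⟨y, i⟩ ⟨z, j⟩ h
  simp only [jmap, Prod.mk.injEq, add_right_inj, Nat.cast_inj] at h
  exact Prod.ext h.1 (Fin.ext h.2)

theorem exists_window {Y : Type} (L : List ((Y × ℤ) × Bool)) :
    ∃ (k : ℕ) (a : ℤ), ConjIn (jmap Y a (k + 1)) (FreeGroup.mk L) := by
  have : ∃ N : ℕ, ∀ p ∈ L, p.1.2.natAbs ≤ N := by
    induction L with
    | nil => exact ⟨0, by simp⟩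
    | cons p L ih =>
      obtain ⟨N, hN⟩ := ih
      refine ⟨N + p.1.2.natAbs, ?_⟩
      intro q hq
      rcases List.mem_cons.1 hq with rfl | hq
      · omega
      · have := hN q hq; omega
  obtain ⟨N, hN⟩ := this
  refine ⟨2 * N, -N, 1, ?_⟩
  obtain ⟨u, hu⟩ := kill_mem_range (jmap Y (-N) (2 * N + 1)) ∅ L (by
    intro p hp
    right
    have := hN p hp
    refine ⟨(p.1.1, ⟨(p.1.2 + N).toNat, by omega⟩), ?_⟩
    ext
    · rfl
    · simp only [jmap]; omega)
  rw [kill_empty] at hu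
  exact ⟨u, by simpa using hu⟩

theorem ConjIn.comp {S T X : Type} (f : T → X) (h : S → T) {R : FreeGroup X} {R' : FreeGroup T}
    {g : FreeGroup X} (e : R = g * FreeGroup.map f R' * g⁻¹) (hc : ConjIn h R') :
    ConjIn (f ∘ h) R := by
  obtain ⟨g', u, rfl⟩ := hc
  refine ⟨g * FreeGroup.map f g', u, ?_⟩
  rw [e, map_mul, map_mul, map_inv, FreeGroup.map.comp]
  group

theorem freiOpt_step {n : ℕ} (ih : ∀ m < n, FreiInj m) : FreiOpt n := by
  intro Y R hlen hR w hw
  by_cases hσ : (sig Y R).toAdd ≠ 0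
  · exact freiheit_nonzero R (sig Y) (by simp [sig]) (by simp [sig]) hσ w hw
  push Not at hσ
  obtain ⟨L, hL, hLn⟩ := hlen
  have hnone : none ∈ L.map Prod.fst := by
    by_contra hno
    apply hR
    obtain ⟨u, hu⟩ := kill_mem_range (some : Y → Option Y) ∅ L (by
      rintro ⟨o, b⟩ hp
      right
      rcases o with _ | y
      · exact absurd (List.mem_map_of_mem (f := Prod.fst) hp) hno
      · exact ⟨y, rfl⟩)
    rw [kill_empty, hL] at hu
    exact ⟨1, u, by simpa using hu⟩
  set L' := rwl L 0 with hL'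
  have hlt : L'.length < n := lt_of_lt_of_le (rwl_length_lt L 0 hnone) hLn
  have hRR : R = unfoldHom Y (FreeGroup.mk L') := by
    have := rwl_spec L 0
    rw [hL, hσ] at this
    simpa using this
  have hlen' : HasLen (FreeGroup.mk L') L'.length := ⟨L', rfl, le_refl _⟩
  have hex := exists_window L'
  classical
  obtain ⟨a, hc⟩ := Nat.find_spec hex
  have hmin : ∀ m, m < Nat.find hex → ∀ a, ¬ ConjIn (jmap Y a (m + 1)) (FreeGroup.mk L') :=
    fun m hm a ha => Nat.find_min hex hm ⟨a, ha⟩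
  revert hc hmin
  generalize Nat.find hex = k
  intro hc hmin
  obtain ⟨R2, hR2len, g, hg⟩ := exists_retract _ (jmap_inj _ _ _) hlen' hc
  rcases k with _ | k
  · exfalso
    apply hR
    have e : (unfoldHom Y).comp (FreeGroup.map (jmap Y a (0 + 1))) =
        (MulAut.conj (FreeGroup.of (none : Option Y) ^ a)).toMonoidHom.comp
          ((FreeGroup.map some).comp (FreeGroup.map Prod.fst)) := by
      apply FreeGroup.ext_hom
      rintro ⟨y, i⟩
      have hi : (i : ℕ) = 0 := by omega
      have hp : jmap Y a (0 + 1) (y, i) = (y, a) := by simp [jmap, hi]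
      simp only [MonoidHom.comp_apply, FreeGroup.map.of, hp, MulEquiv.coe_toMonoidHom,
        MulAut.conj_apply]
      simp [unfoldHom]
    refine ⟨unfoldHom Y g * FreeGroup.of (none : Option Y) ^ a, FreeGroup.map Prod.fst R2, ?_⟩
    rw [hRR, hg, map_mul, map_mul, map_inv]
    have e2 := DFunLike.congr_fun e R2
    simp only [MonoidHom.comp_apply, MulEquiv.coe_toMonoidHom, MulAut.conj_apply] at e2
    rw [e2]
    group
  · let cs : Y × Fin (k + 1) → Y × Fin (k + 1 + 1) := Prod.map id Fin.castSucc
    let su : Y × Fin (k + 1) → Y × Fin (k + 1 + 1) := Prod.map id Fin.succ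
    have hcs : Function.Injective cs :=
      Function.injective_id.prodMap (Fin.castSucc_injective _)
    have hsu : Function.Injective su :=
      Function.injective_id.prodMap (Fin.succ_injective _)
    have ncs : ¬ ConjIn cs R2 := by
      intro h
      apply hmin k (Nat.lt_succ_self k) a
      exact ConjIn.comp _ _ hg h
    have nsu : ¬ ConjIn su R2 := by
      intro h
      apply hmin k (Nat.lt_succ_self k) (a + 1)
      convert ConjIn.comp _ _ hg h using 1
      funext p
      ext
      · rfl
      · simp [jmap, su]; ring
    let N := Subgroup.normalClosure {R2}
    let q : FreeGroup (Y × Fin (k + 1 + 1)) →* _ ⧸ N := QuotientGroup.mk' N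
    let c := q.comp (FreeGroup.map cs)
    let s := q.comp (FreeGroup.map su)
    have hc : Function.Injective c := by
      rw [injective_iff_map_eq_one]
      intro v hv
      exact ih _ hlt _ _ cs hcs R2 hR2len ncs v ((QuotientGroup.eq_one_iff _).1 hv)
    have hs : Function.Injective s := by
      rw [injective_iff_map_eq_one]
      intro v hv
      exact ih _ hlt _ _ su hsu R2 hR2len nsu v ((QuotientGroup.eq_one_iff _).1 hv)
    let φ : c.range ≃* s.range := (c.ofInjective hc).symm.trans (s.ofInjective hs)
    let t : HNNExtension _ c.range s.range φ := HNNExtension.t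
    let o : _ →* HNNExtension _ c.range s.range φ := HNNExtension.of
    have hto : ∀ v, t * o (c v) * t⁻¹ = o (s v) := by
      intro v
      have h1 := HNNExtension.t_mul_of (φ := φ) (c.ofInjective hc v)
      have h2 : φ (c.ofInjective hc v) = s.ofInjective hs v := by simp [φ]
      rw [h2] at h1
      rw [mul_inv_eq_iff_eq_mul]
      exact h1
    have hpow : ∀ (y : Y) (i : Fin (k + 1 + 1)), t ^ (i : ℕ) * o (q (FreeGroup.of (y, 0))) *
        (t ^ (i : ℕ))⁻¹ = o (q (FreeGroup.of (y, i))) := by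
      intro y i
      induction i using Fin.induction with
      | zero => simp
      | succ i ih =>
        have h1 := hto (FreeGroup.of (y, i))
        have h2 : c (FreeGroup.of (y, i)) = q (FreeGroup.of (y, i.castSucc)) := by
          simp [c, cs]
        have h3 : s (FreeGroup.of (y, i)) = q (FreeGroup.of (y, i.succ)) := by
          simp [s, su]
        rw [← h3, ← h1, h2, ← ih]
        simp only [Fin.val_succ, Fin.val_castSucc, pow_succ']
        group
    let Ψ : FreeGroup (Option Y) →* HNNExtension _ c.range s.range φ :=
      FreeGroup.lift (fun x => Option.elim x t (fun y => o (q (FreeGroup.of (y, 0)))))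
    have e : (Ψ.comp (unfoldHom Y)).comp (FreeGroup.map (jmap Y a (k + 1 + 1))) =
        (MulAut.conj (t ^ a)).toMonoidHom.comp (o.comp q) := by
      apply FreeGroup.ext_hom
      rintro ⟨y, i⟩
      simp only [MonoidHom.comp_apply, MulEquiv.coe_toMonoidHom]
      rw [MulAut.conj_apply]
      simp only [FreeGroup.map.of, unfoldHom, FreeGroup.lift_apply_of, Ψ, jmap, map_mul, map_inv, map_zpow,
        Option.elim, ← hpow y i]
      rw [zpow_add, zpow_natCast]
      group
    have hΨR : Ψ R = 1 := by
      have e2 := DFunLike.congr_fun e R2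
      simp only [MonoidHom.comp_apply, MulEquiv.coe_toMonoidHom, MulAut.conj_apply] at e2
      have hq : q R2 = 1 := (QuotientGroup.eq_one_iff _).2 (Subgroup.subset_normalClosure rfl)
      rw [hq] at e2
      rw [hRR, hg, map_mul, map_mul, map_mul, map_mul, e2]
      simp
    have hle : Subgroup.normalClosure {R} ≤ Ψ.ker := by
      apply Subgroup.normalClosure_le_normal
      rintro _ rfl
      exact hΨR
    have hw1 : Ψ (FreeGroup.map some w) = 1 := hle hw
    have e3 : Ψ.comp (FreeGroup.map some) =
        (o.comp c).comp (FreeGroup.map (fun y : Y => (y, (0 : Fin (k + 1))))) := by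
      apply FreeGroup.ext_hom
      intro y
      simp [Ψ, c, cs]
    have e4 := DFunLike.congr_fun e3 w
    simp only [MonoidHom.comp_apply] at e4
    rw [hw1] at e4
    have e5 : c (FreeGroup.map (fun y : Y => (y, (0 : Fin (k + 1)))) w) = 1 := by
      apply HNNExtension.of_injective
      rw [map_one]
      exact e4.symm
    have e6 := (injective_iff_map_eq_one c).1 hc _ e5
    exact FreeGroup.map_injective (fun a b h => congrArg Prod.fst h) (e6.trans (map_one _).symm)

theorem freiInj (n : ℕ) : FreiInj n := by
  induction n using Nat.strong_induction_on with
  | _ n ih => exact freiInj_of_opt (freiOpt_step ih)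

/-- Freiheitssatz. -/
theorem freiheitssatz {T X : Type} (f : T → X) (hf : Function.Injective f) (R : FreeGroup X)
    (hR : ¬ ConjIn f R) (w : FreeGroup T) (hw : FreeGroup.map f w ∈ Subgroup.normalClosure {R}) :
    w = 1 := by
  obtain ⟨L, hL⟩ := Quot.exists_rep R
  exact freiInj L.length T X f hf R ⟨L, hL, le_refl _⟩ hR w hw

end ORG

namespace ORG
open Monoid

abbrev el {A B : Type} [Group A] [Group B] : A ⊕ B → Coprod A B :=
  Sum.elim (fun a => Coprod.inl a) (fun b => Coprod.inr b)

def BF (A B : Type) : Bool → Type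
  | true => A
  | false => B

instance bfGroup (A B : Type) [Group A] [Group B] : ∀ b, Group (BF A B b)
  | true => inferInstanceAs (Group A)
  | false => inferInstanceAs (Group B)

def toSig {A B : Type} : A ⊕ B → Σ b, BF A B b
  | Sum.inl a => ⟨true, a⟩
  | Sum.inr b => ⟨false, b⟩

theorem toSig_fst {A B : Type} (s : A ⊕ B) : (toSig s).1 = s.isLeft := by
  cases s <;> rfl

def coprodToI (A B : Type) [Group A] [Group B] : Coprod A B →* CoprodI (BF A B) :=
  Coprod.lift (CoprodI.of (M := BF A B) (i := true)) (CoprodI.of (M := BF A B) (i := false))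

theorem coprodToI_el {A B : Type} [Group A] [Group B] (s : A ⊕ B) :
    coprodToI A B (el s) = CoprodI.of (toSig s).2 := by
  cases s <;> rfl

theorem normal_form {A B : Type} [Group A] [Group B] (l : List (A ⊕ B)) (hl : l ≠ [])
    (h : (l.map el).prod = 1) :
    (∃ s ∈ l, el s = 1) ∨ (∃ a b l1 l2, l = l1 ++ a :: b :: l2 ∧ a.isLeft = b.isLeft) := by
  classical
  by_contra hcon
  push Not at hcon
  obtain ⟨h1, h2⟩ := hcon
  let w : CoprodI.Word (BF A B) :=
    { toList := l.map toSig
      ne_one := by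
        intro p hp
        obtain ⟨s, hs, rfl⟩ := List.mem_map.1 hp
        intro h3
        apply h1 s hs
        cases s with
        | inl a => have : a = 1 := h3
                   simp [this]
        | inr a => have : a = 1 := h3
                   simp [this]
      chain_ne := by
        rw [List.isChain_map, List.isChain_iff_forall_rel_of_append_cons_cons]
        intro a b l1 l2 h3
        rw [toSig_fst, toSig_fst]
        exact h2 a b l1 l2 h3 }
  have hw : w.prod = 1 := by
    have h3 := congrArg (coprodToI A B) h
    rw [map_list_prod, map_one, List.map_map] at h3
    rw [← h3]
    simp only [CoprodI.Word.prod, w, List.map_map]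
    congr 1
    apply List.map_congr_left
    intro s _
    exact (coprodToI_el s).symm
  have h4 : w = CoprodI.Word.empty := by
    apply CoprodI.Word.equiv.symm.injective
    change w.prod = CoprodI.Word.empty.prod
    rw [hw, CoprodI.Word.prod_empty]
  have h5 := congrArg CoprodI.Word.toList h4
  simp [w, CoprodI.Word.empty] at h5
  exact hl h5

/-! Grushko -/

/-- vertices of the complex, as elements of the big group -/
def vert {F W : Type} [Group F] : Option W → Coprod F (FreeGroup W)
  | none => 1
  | some w => Coprod.inr (FreeGroup.of w)

def SK (F W : Type) [Group F] : Set (Coprod F (FreeGroup W)) :=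
  {c | ∃ (g : F) (v : Option W), c = (Coprod.inl g : Coprod F (FreeGroup W)) * vert v}

theorem SK_mul {F W : Type} [Group F] (f : F) {c : Coprod F (FreeGroup W)} (h : c ∈ SK F W) :
    Coprod.inl f * c ∈ SK F W := by
  obtain ⟨g, v, hc⟩ := h
  exact ⟨f * g, v, by rw [hc, map_mul, mul_assoc]⟩

theorem one_mem_SK {F W : Type} [Group F] : (1 : Coprod F (FreeGroup W)) ∈ SK F W :=
  ⟨1, none, by simp [vert]⟩

theorem vert_inj {F W : Type} [Group F] {f : F} {u v : Option W}
    (h : Coprod.inl f * vert u = vert v) : u = v := by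
  have h2 := congrArg Coprod.snd h
  rcases u with _ | u <;> rcases v with _ | v
  · rfl
  · simp [vert] at h2
  · simp [vert] at h2
  · simp [vert] at h2
    rw [FreeGroup.of_injective h2]

def Adj {F W P Q : Type} [Group F] [Group P] [Group Q]
    (e : Coprod F (FreeGroup W) ≃* Coprod P Q) (c d : Coprod F (FreeGroup W)) : Prop :=
  c ∈ SK F W ∧ d ∈ SK F W ∧ ∃ s : P ⊕ Q, e d = e c * el s

structure St {F A B : Type} [Group F] [Group A] [Group B] (φ : F →* Coprod A B) (W : Type) where
  P : Type
  Q : Type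
  gP : Group P
  gQ : Group Q
  α : P →* A
  β : Q →* B
  e : Coprod F (FreeGroup W) ≃* Coprod P Q
  comm : ∀ g, Coprod.map α β (e (Coprod.inl g)) = φ g
  conn : ∀ c ∈ SK F W, Relation.ReflTransGen (Adj e) 1 c

section tie
variable {F W P Q A B : Type} [Group F] [Group P] [Group Q] [Group A] [Group B]
    (e : Coprod F (FreeGroup W) ≃* Coprod P Q)

def Pth : Coprod F (FreeGroup W) → List (P ⊕ Q) → Prop
  | c, [] => c ∈ SK F W
  | c, s :: l => c ∈ SK F W ∧ Pth (c * e.symm (el s)) l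

theorem Pth.start {c : Coprod F (FreeGroup W)} {l : List (P ⊕ Q)} (h : Pth e c l) :
    c ∈ SK F W := by
  cases l with
  | nil => exact h
  | cons s l => exact h.1

theorem Pth.trans (f : F) {c : Coprod F (FreeGroup W)} {l : List (P ⊕ Q)} (h : Pth e c l) :
    Pth e (Coprod.inl f * c) l := by
  induction l generalizing c with
  | nil => exact SK_mul f h
  | cons s l ih =>
    refine ⟨SK_mul f h.1, ?_⟩
    rw [mul_assoc]
    exact ih h.2

theorem Pth_append {c : Coprod F (FreeGroup W)} {l1 l2 : List (P ⊕ Q)} :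
    Pth e c (l1 ++ l2) ↔ Pth e c l1 ∧ Pth e (c * e.symm (l1.map el).prod) l2 := by
  induction l1 generalizing c with
  | nil => simp only [List.nil_append, List.map_nil, List.prod_nil, map_one, mul_one]
           exact ⟨fun h => ⟨h.start, h⟩, fun h => h.2⟩
  | cons s l ih =>
    simp only [List.cons_append, Pth, List.map_cons, List.prod_cons, map_mul, ih, and_assoc,
      mul_assoc]

theorem exists_pth {c d : Coprod F (FreeGroup W)} (hc : c ∈ SK F W)
    (h : Relation.ReflTransGen (Adj e) c d) :
    ∃ l, Pth e c l ∧ d = c * e.symm (l.map el).prod := by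
  induction h with
  | refl => exact ⟨[], hc, by simp⟩
  | tail h1 h2 ih =>
    rename_i b d
    obtain ⟨l, hl, hb⟩ := ih
    obtain ⟨h3, h4, s, hs⟩ := h2
    have hd : d = b * e.symm (el s) := by
      apply e.injective; rw [hs]; simp
    refine ⟨l ++ [s], ?_, ?_⟩
    · rw [Pth_append, ← hb]
      exact ⟨hl, h3, hd ▸ h4⟩
    · rw [hd, hb]; simp [mul_assoc]

theorem no_tie (ψ : Coprod P Q →* Coprod A B) (α : P →* A) (β : Q →* B)
    (hψ : ψ = Coprod.map α β)
    (hno : ∀ c ∈ SK F W, ∀ d ∈ SK F W, ∀ s : P ⊕ Q, e d = e c * el s → ψ (el s) = 1 →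
      ∃ f, d = Coprod.inl f * c) (m : ℕ) :
    ∀ (l : List (P ⊕ Q)) (c : Coprod F (FreeGroup W)), l.length ≤ m → Pth e c l →
      ψ (l.map el).prod = 1 → ∃ f, c * e.symm (l.map el).prod = Coprod.inl f * c := by
  induction m with
  | zero =>
    intro l c hl _ _
    have : l = [] := List.eq_nil_of_length_eq_zero (by omega)
    subst this
    exact ⟨1, by simp⟩
  | succ m ih =>
    intro l c hl hp h1
    by_cases hnil : l = []
    · subst hnil; exact ⟨1, by simp⟩
    have hel : ∀ s : P ⊕ Q, ψ (el s) = el (Sum.map α β s) := by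
      intro s; subst hψ; cases s <;> simp
    have h2 := normal_form (l.map (Sum.map α β)) (by simpa using hnil) (by
      rw [← h1, map_list_prod, List.map_map, List.map_map]
      congr 1
      apply List.map_congr_left
      intro s _
      exact (hel s).symm)
    rcases h2 with ⟨s', hs', hs1⟩ | ⟨a', b', l1', l2', hl', hab⟩
    · obtain ⟨s, hs, rfl⟩ := List.mem_map.1 hs'
      rw [← hel] at hs1
      obtain ⟨l1, l2, rfl⟩ := List.append_of_mem hs
      rw [Pth_append] at hp
      obtain ⟨hp1, hp2, hp3⟩ := hp
      obtain ⟨f, hf⟩ := hno _ hp2 _ hp3.start s (by simp) hs1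
      have hp4 : Pth e (c * e.symm (l1.map el).prod) l2 := by
        have := hp3.trans e f⁻¹
        rw [hf, ← mul_assoc, ← map_mul] at this
        simpa using this
      obtain ⟨f2, hf2⟩ := ih (l1 ++ l2) c (by simp at hl ⊢; omega)
        ((Pth_append e).2 ⟨hp1, hp4⟩) (by
          simp only [List.map_append, List.map_cons, List.prod_append, List.prod_cons, map_mul, hs1,
            one_mul] at h1 ⊢
          exact h1)
      refine ⟨f * f2, ?_⟩
      rw [map_mul, mul_assoc, ← hf2]
      simp only [List.map_append, List.map_cons, List.prod_append, List.prod_cons, map_mul]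
      rw [← mul_assoc, ← mul_assoc, hf]
      simp only [mul_assoc]
    · obtain ⟨l1, l2, rfl, hl1, hl2⟩ := List.map_eq_append_iff.1 hl'
      obtain ⟨a, l3, rfl, rfl, hl3⟩ := List.map_eq_cons_iff.1 hl2
      obtain ⟨b, l4, rfl, rfl, hl4⟩ := List.map_eq_cons_iff.1 hl3
      have : ∃ s : P ⊕ Q, (el s : Coprod P Q) = el a * el b := by
        rcases a with a | a <;> rcases b with b | b
        · exact ⟨Sum.inl (a * b), by simp⟩
        · simp at hab
        · simp at hab
        · exact ⟨Sum.inr (a * b), by simp⟩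
      obtain ⟨s, hs⟩ := this
      have hprod : ((l1 ++ a :: b :: l4).map el).prod = ((l1 ++ s :: l4).map el : List (Coprod P Q)).prod := by
        simp [hs, mul_assoc]
      rw [hprod] at h1 ⊢
      apply ih _ c (by simp at hl ⊢; omega) _ h1
      rw [Pth_append] at hp ⊢
      refine ⟨hp.1, hp.2.1, ?_⟩
      have := hp.2.2.2
      rw [hs, map_mul, ← mul_assoc]
      exact this
end tie

end ORG

namespace ORG
open Monoid

theorem fold_state {F A B W : Type} [Group F] [Group A] [Group B] {φ : F →* Coprod A B}
    {P Q : Type} [Group P] [Group Q] (α : P →* A) (β : Q →* B)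
    (e : Coprod F (FreeGroup W) ≃* Coprod P Q)
    (comm : ∀ g, Coprod.map α β (e (Coprod.inl g)) = φ g)
    (conn : ∀ c ∈ SK F W, Relation.ReflTransGen (Adj e) 1 c)
    (b : W) (u' : Option {w : W // w ≠ b}) (f : F) (s : P ⊕ Q)
    (htie : e (vert (some b)) = e (Coprod.inl f * vert (u'.map Subtype.val)) * el s)
    (hs : Coprod.map α β (el s) = 1) : Nonempty (St φ {w : W // w ≠ b}) := by
  classical
  let NP : Subgroup P := Subgroup.normalClosure {p | Sum.inl p = s}
  let NQ : Subgroup Q := Subgroup.normalClosure {q | Sum.inr q = s}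
  let π : Coprod P Q →* Coprod (P ⧸ NP) (Q ⧸ NQ) :=
    Coprod.map (QuotientGroup.mk' NP) (QuotientGroup.mk' NQ)
  have hπs : π (el s) = 1 := by
    rcases s with p | q
    · have : QuotientGroup.mk' NP p = 1 :=
        (QuotientGroup.eq_one_iff _).2 (Subgroup.subset_normalClosure rfl)
      simp only [π, el, Sum.elim_inl, Coprod.map_apply_inl, this, map_one]
    · have : QuotientGroup.mk' NQ q = 1 :=
        (QuotientGroup.eq_one_iff _).2 (Subgroup.subset_normalClosure rfl)
      simp only [π, el, Sum.elim_inr, Coprod.map_apply_inr, this, map_one]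
  let κ : Coprod F (FreeGroup W) →* Coprod F (FreeGroup {w : W // w ≠ b}) :=
    Coprod.lift Coprod.inl (FreeGroup.lift fun w =>
      if h : w = b then Coprod.inl f * vert u' else Coprod.inr (FreeGroup.of ⟨w, h⟩))
  have κl : ∀ g, κ (Coprod.inl g) = Coprod.inl g := fun g => by simp [κ]
  have κb : κ (vert (some b)) = Coprod.inl f * vert u' := by simp [κ, vert]
  have κv : ∀ v' : Option {w : W // w ≠ b}, κ (vert (v'.map Subtype.val)) = vert v' := by
    intro v'
    rcases v' with _ | ⟨w, hw⟩
    · simp [vert]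
    · simp [κ, vert, hw]
  have hes : e.symm (el s) = (Coprod.inl f * vert (u'.map Subtype.val))⁻¹ * vert (some b) := by
    apply e.injective
    rw [map_mul, htie]; simp [mul_assoc]
  have κs : κ (e.symm (el s)) = 1 := by
    rw [hes, map_mul, map_inv, map_mul, κl, κv, κb]; simp
  let γ : Coprod P Q →* Coprod F (FreeGroup {w : W // w ≠ b}) := κ.comp e.symm.toMonoidHom
  have hγ : ∀ x, γ x = κ (e.symm x) := fun _ => rfl
  have hNP : NP ≤ (γ.comp Coprod.inl).ker := by
    apply Subgroup.normalClosure_le_normal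
    rintro p rfl
    exact κs
  have hNQ : NQ ≤ (γ.comp Coprod.inr).ker := by
    apply Subgroup.normalClosure_le_normal
    rintro p rfl
    exact κs
  let δ : Coprod (P ⧸ NP) (Q ⧸ NQ) →* Coprod F (FreeGroup {w : W // w ≠ b}) :=
    Coprod.lift (QuotientGroup.lift NP (γ.comp Coprod.inl) hNP)
      (QuotientGroup.lift NQ (γ.comp Coprod.inr) hNQ)
  have hδ : ∀ x, δ (π x) = κ (e.symm x) := by
    have : δ.comp π = γ := by
      apply Coprod.hom_ext
      · ext p; rfl
      · ext q; rfl
    intro x; exact DFunLike.congr_fun this x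
  let ε : Coprod F (FreeGroup {w : W // w ≠ b}) →* Coprod (P ⧸ NP) (Q ⧸ NQ) :=
    Coprod.lift ((π.comp e.toMonoidHom).comp Coprod.inl)
      (FreeGroup.lift fun w => π (e (Coprod.inr (FreeGroup.of w.1))))
  have εl : ∀ g, ε (Coprod.inl g) = π (e (Coprod.inl g)) := fun g => rfl
  have εv : ∀ v' : Option {w : W // w ≠ b}, ε (vert v') = π (e (vert (v'.map Subtype.val))) := by
    intro v'
    rcases v' with _ | ⟨w, hw⟩
    · simp [vert]
    · simp [ε, vert]
  have hεκ : ∀ k, ε (κ k) = π (e k) := by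
    have : ε.comp κ = π.comp e.toMonoidHom := by
      apply Coprod.hom_ext
      · ext g; simp [κl, εl]
      · apply FreeGroup.ext_hom
        intro w
        change ε (κ (vert (some w))) = π (e (vert (some w)))
        by_cases hw : w = b
        · subst hw
          rw [κb, htie, map_mul, map_mul, hπs, mul_one, map_mul, map_mul, εl, εv]
        · have := κv (some ⟨w, hw⟩)
          simp only [Option.map_some] at this
          rw [this, εv]; rfl
    intro k; exact DFunLike.congr_fun this k
  have πsurj : ∀ y, ∃ x, π x = y := by
    intro y
    induction y using Coprod.induction_on with
    | inl m => obtain ⟨p, rfl⟩ := QuotientGroup.mk'_surjective NP m; exact ⟨Coprod.inl p, rfl⟩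
    | inr m => obtain ⟨p, rfl⟩ := QuotientGroup.mk'_surjective NQ m; exact ⟨Coprod.inr p, rfl⟩
    | mul x y hx hy =>
      obtain ⟨x, rfl⟩ := hx
      obtain ⟨y, rfl⟩ := hy
      exact ⟨x * y, map_mul _ _ _⟩
  let e' : Coprod F (FreeGroup {w : W // w ≠ b}) ≃* Coprod (P ⧸ NP) (Q ⧸ NQ) :=
    MonoidHom.toMulEquiv ε δ (by
      apply Coprod.hom_ext
      · ext g
        simp only [MonoidHom.comp_apply, εl, hδ, MulEquiv.symm_apply_apply, κl, MonoidHom.id_apply]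
      · apply FreeGroup.ext_hom
        intro w
        change δ (ε (vert (some w))) = vert (some w)
        rw [εv, hδ, MulEquiv.symm_apply_apply, κv]) (by
      refine MonoidHom.ext fun y => ?_
      obtain ⟨x, rfl⟩ := πsurj y
      simp only [MonoidHom.comp_apply, hδ, hεκ, MulEquiv.apply_symm_apply, MonoidHom.id_apply])
  have he' : ∀ x, e' x = ε x := fun _ => rfl
  have hαk : NP ≤ α.ker := by
    apply Subgroup.normalClosure_le_normal
    rintro p rfl
    simp only [el, Sum.elim_inl, Coprod.map_apply_inl] at hs
    exact Coprod.inl_injective (hs.trans (map_one _).symm)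
  have hβk : NQ ≤ β.ker := by
    apply Subgroup.normalClosure_le_normal
    rintro p rfl
    simp only [el, Sum.elim_inr, Coprod.map_apply_inr] at hs
    exact Coprod.inr_injective (hs.trans (map_one _).symm)
  have hκS : ∀ c ∈ SK F W, κ c ∈ SK F {w : W // w ≠ b} := by
    rintro c ⟨g, v, hc⟩
    rw [hc, map_mul, κl]
    apply SK_mul
    by_cases hv : v = some b
    · rw [hv, κb]; exact ⟨f, u', rfl⟩
    · have : ∃ v' : Option {w : W // w ≠ b}, v'.map Subtype.val = v := by
        rcases v with _ | w
        · exact ⟨none, rfl⟩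
        · exact ⟨some ⟨w, fun h => hv (by rw [h])⟩, rfl⟩
      obtain ⟨v', rfl⟩ := this
      rw [κv]
      exact ⟨1, v', by simp⟩
  refine ⟨{ P := P ⧸ NP, Q := Q ⧸ NQ, gP := inferInstance, gQ := inferInstance
            α := QuotientGroup.lift NP α hαk, β := QuotientGroup.lift NQ β hβk
            e := e', comm := ?_, conn := ?_ }⟩
  · intro g
    rw [he', εl, ← comm g]
    simp only [π]
    rw [Coprod.map_map]
    rfl
  · rintro c' ⟨g, v', hc'⟩
    have h1 : c' = κ (Coprod.inl g * vert (v'.map Subtype.val)) := by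
      rw [map_mul, κl, κv, hc']
    rw [h1]
    have h2 := conn (Coprod.inl g * vert (v'.map Subtype.val)) ⟨g, _, rfl⟩
    have hadj : ∀ c d, Adj e c d → Adj e' (κ c) (κ d) := ?_
    · have h3 := Relation.ReflTransGen.lift (p := Adj e') κ hadj _ _ h2
      change Relation.ReflTransGen (Adj e') (κ 1) _ at h3
      rwa [map_one] at h3
    · rintro c d ⟨hc, hd, t, ht⟩
      refine ⟨hκS c hc, hκS d hd, Sum.map (QuotientGroup.mk' NP) (QuotientGroup.mk' NQ) t, ?_⟩
      rw [he', he', hεκ, hεκ, ht, map_mul]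
      congr 1
      cases t <;> rfl

theorem exists_fold {F A B W : Type} [Group F] [Group A] [Group B] {φ : F →* Coprod A B}
    (hφ : Function.Surjective φ) (st : St φ W) (w0 : W) :
    ∃ b : W, Nonempty (St φ {w : W // w ≠ b}) := by
  obtain ⟨P, Q, gP, gQ, α, β, e, comm, conn⟩ := st
  have tie : ∃ c ∈ SK F W, ∃ d ∈ SK F W, ∃ s : P ⊕ Q, e d = e c * el s ∧
      Coprod.map α β (el s) = 1 ∧ ¬ ∃ f, d = Coprod.inl f * c := by
    by_contra hcon
    push Not at hcon
    obtain ⟨g, hg⟩ := hφ (Coprod.map α β (e (vert (some w0))))⁻¹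
    have hS : Coprod.inl g * vert (some w0) ∈ SK F W := ⟨g, _, rfl⟩
    obtain ⟨l, hl, hl2⟩ := exists_pth e one_mem_SK (conn _ hS)
    obtain ⟨f, hf⟩ := no_tie e (Coprod.map α β) α β rfl hcon l.length l 1 le_rfl hl (by
      have : (l.map el).prod = e (Coprod.inl g * vert (some w0)) := by rw [hl2]; simp
      rw [this, map_mul, map_mul, comm, hg]; simp)
    rw [← hl2] at hf
    have : (Coprod.inl (f⁻¹ * g) : Coprod F (FreeGroup W)) * vert (some w0) = vert none := by
      rw [map_mul, mul_assoc, hf]; simp [vert]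
    have := vert_inj this
    simp at this
  obtain ⟨c, ⟨g1, u, hc⟩, d, ⟨g2, v, hd⟩, s, h1, h2, h3⟩ := tie
  have huv : u ≠ v := by
    rintro rfl
    exact h3 ⟨g2 * g1⁻¹, by rw [hc, hd]; simp [mul_assoc]⟩
  have lift_opt : ∀ (b : W) (u : Option W), u ≠ some b →
      ∃ u' : Option {w : W // w ≠ b}, u'.map Subtype.val = u := by
    intro b u hu
    rcases u with _ | w
    · exact ⟨none, rfl⟩
    · exact ⟨some ⟨w, fun h => hu (by rw [h])⟩, rfl⟩
  rcases v with _ | b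
  · rcases u with _ | b
    · exact absurd rfl huv
    · obtain ⟨v', hv'⟩ := lift_opt b none (by simp)
      refine ⟨b, fold_state α β e comm conn b v' (g1⁻¹ * g2) (s.map Inv.inv Inv.inv) ?_ ?_⟩
      · have hel : (el (s.map Inv.inv Inv.inv) : Coprod P Q) = (el s)⁻¹ := by cases s <;> simp
        rw [hel, eq_mul_inv_iff_mul_eq, hv', map_mul e, map_mul, map_mul e, mul_assoc, ← map_mul e,
          ← hd, h1, hc, map_mul e]
        simp [mul_assoc]
      · have hel : (el (s.map Inv.inv Inv.inv) : Coprod P Q) = (el s)⁻¹ := by cases s <;> simp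
        rw [hel, map_inv, h2, inv_one]
  · obtain ⟨u', hu'⟩ := lift_opt b u huv
    refine ⟨b, fold_state α β e comm conn b u' (g2⁻¹ * g1) s ?_ h2⟩
    rw [hu', map_mul Coprod.inl, mul_assoc (Coprod.inl g2⁻¹), ← hc, map_mul e, mul_assoc (e _), ← h1,
      hd]
    simp

theorem grushko_of_state {F A B : Type} [Group F] [Group A] [Group B] {φ : F →* Coprod A B}
    (hφ : Function.Surjective φ) (n : ℕ) : ∀ (W : Type) [Finite W], Nat.card W = n → St φ W →
    ∃ (P Q : Type) (_ : Group P) (_ : Group Q) (α : P →* A) (β : Q →* B) (e : F ≃* Coprod P Q),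
      ∀ g, Coprod.map α β (e g) = φ g := by
  induction n with
  | zero =>
    intro W _ hW st
    have : IsEmpty W := by
      rcases Nat.card_eq_zero.1 hW with h | h
      · exact h
      · exact absurd h (not_infinite_iff_finite.2 inferInstance)
    obtain ⟨P, Q, gP, gQ, α, β, e, comm, conn⟩ := st
    let i : F ≃* Coprod F (FreeGroup W) := MonoidHom.toMulEquiv Coprod.inl Coprod.fst (by ext; simp)
      (by
        apply Coprod.hom_ext
        · ext; simp
        · apply FreeGroup.ext_hom; intro w; exact isEmptyElim w)
    exact ⟨P, Q, gP, gQ, α, β, i.trans e, fun g => comm g⟩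
  | succ n ih =>
    intro W _ hW st
    have : Nonempty W := by
      by_contra h
      rw [not_nonempty_iff] at h
      simp at hW
    obtain ⟨w0⟩ := this
    obtain ⟨b, ⟨st'⟩⟩ := exists_fold hφ st w0
    apply ih {w : W // w ≠ b} ?_ st'
    have := Fintype.ofFinite W
    classical
    rw [Nat.card_eq_fintype_card] at hW ⊢
    rw [Fintype.card_subtype_compl, hW]
    simp

end ORG

namespace ORG
open Monoid

def pre {G : Type} [Group G] (t : ℕ → G) : ℕ → G
  | 0 => 1
  | i + 1 => pre t i * t i

theorem pre_succ' {G : Type} [Group G] (t : ℕ → G) (i : ℕ) :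
    pre t (i + 1) = t 0 * pre (fun j => t (j + 1)) i := by
  induction i with
  | zero => simp [pre]
  | succ i ih => rw [pre, ih, pre, mul_assoc]

theorem map_pre {G H : Type} [Group G] [Group H] (f : G →* H) (t : ℕ → G) (u : ℕ → H) (m : ℕ)
    (h : ∀ i < m, f (t i) = u i) : f (pre t m) = pre u m := by
  induction m with
  | zero => simp [pre]
  | succ m ih => rw [pre, map_mul, ih (fun i hi => h i (by omega)), h m (by omega), pre]

theorem exists_list {A B : Type} [Group A] [Group B] (c : Coprod A B) :
    ∃ l : List (A ⊕ B), (l.map el).prod = c := by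
  induction c using Coprod.induction_on with
  | inl a => exact ⟨[Sum.inl a], by simp⟩
  | inr a => exact ⟨[Sum.inr a], by simp⟩
  | mul x y hx hy =>
    obtain ⟨l, rfl⟩ := hx
    obtain ⟨l', rfl⟩ := hy
    exact ⟨l ++ l', by simp⟩

theorem pre_list {A B : Type} [Group A] [Group B] (l : List (A ⊕ B)) (m : ℕ) (h : l.length ≤ m) :
    pre (fun i => (el (l.getD i (Sum.inl 1)) : Coprod A B)) m = (l.map el).prod := by
  induction l generalizing m with
  | nil =>
    clear h
    induction m with
    | zero => rfl
    | succ m ih => rw [pre, ih]; simp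
  | cons a l ih =>
    obtain ⟨m, rfl⟩ : ∃ k, m = k + 1 := ⟨m - 1, by simp at h; omega⟩
    rw [pre_succ']
    have := ih m (by simpa using h)
    simp only [List.getD_cons_succ, List.getD_cons_zero, List.map_cons, List.prod_cons]
    rw [this]

theorem exists_syllables {X A B : Type} [Finite X] [Group A] [Group B]
    (φ : FreeGroup X →* Coprod A B) : ∃ (n : ℕ) (s : X → ℕ → A ⊕ B),
      ∀ x, pre (fun i => el (s x i)) (n + 1) = φ (FreeGroup.of x) := by
  choose l hl using fun x => exists_list (φ (FreeGroup.of x))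
  obtain ⟨N, hN⟩ := (Set.finite_range (fun x => (l x).length)).bddAbove
  refine ⟨N, fun x i => (l x).getD i (Sum.inl 1), fun x => ?_⟩
  rw [pre_list, hl]
  have : (l x).length ≤ N := hN ⟨x, rfl⟩
  omega

theorem Adj_symm {F W P Q : Type} [Group F] [Group P] [Group Q]
    (e : Coprod F (FreeGroup W) ≃* Coprod P Q) : ∀ c d, Adj e c d → Adj e d c := by
  rintro c d ⟨hc, hd, s, hs⟩
  refine ⟨hd, hc, s.map Inv.inv Inv.inv, ?_⟩
  have hel : (el (s.map Inv.inv Inv.inv) : Coprod P Q) = (el s)⁻¹ := by cases s <;> simp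
  rw [hel, hs]; simp

theorem Reach_symm {F W P Q : Type} [Group F] [Group P] [Group Q]
    (e : Coprod F (FreeGroup W) ≃* Coprod P Q) {c d} (h : Relation.ReflTransGen (Adj e) c d) :
    Relation.ReflTransGen (Adj e) d c := by
  induction h with
  | refl => exact Relation.ReflTransGen.refl
  | tail h1 h2 ih => exact Relation.ReflTransGen.head (Adj_symm e _ _ h2) ih

theorem Reach_trans {F W P Q : Type} [Group F] [Group P] [Group Q]
    (e : Coprod F (FreeGroup W) ≃* Coprod P Q) (f : F) {c d}
    (h : Relation.ReflTransGen (Adj e) c d) :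
    Relation.ReflTransGen (Adj e) (Coprod.inl f * c) (Coprod.inl f * d) := by
  induction h with
  | refl => exact Relation.ReflTransGen.refl
  | tail h1 h2 ih =>
    refine Relation.ReflTransGen.tail ih ⟨SK_mul f h2.1, SK_mul f h2.2.1, ?_⟩
    obtain ⟨s, hs⟩ := h2.2.2
    exact ⟨s, by rw [map_mul, hs, map_mul, mul_assoc]⟩

section init
variable {X A B : Type} (n : ℕ) (s : X → ℕ → A ⊕ B)

def ver (X : Type) (n : ℕ) (x : X) : ℕ → Coprod (FreeGroup X) (FreeGroup (X × Fin n))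
  | 0 => 1
  | i + 1 => if h : i < n then Coprod.inr (FreeGroup.of (x, ⟨i, h⟩)) else Coprod.inl (FreeGroup.of x)

abbrev EL : Type := {p : X × Fin (n + 1) // (s p.1 p.2).isLeft = true}
abbrev ER : Type := {p : X × Fin (n + 1) // (s p.1 p.2).isRight = true}

def lab (p : X × Fin (n + 1)) : FreeGroup (EL n s) ⊕ FreeGroup (ER n s) :=
  if h : (s p.1 p.2).isLeft = true then Sum.inl (FreeGroup.of ⟨p, h⟩)
  else Sum.inr (FreeGroup.of ⟨p, by simpa using h⟩)

theorem lab_left (p : EL n s) : lab n s p.1 = Sum.inl (FreeGroup.of p) := by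
  rw [lab, dif_pos p.2]

theorem lab_right (p : ER n s) : lab n s p.1 = Sum.inr (FreeGroup.of p) := by
  have : ¬ (s p.1.1 p.1.2).isLeft = true := by have := p.2; simpa using this
  rw [lab, dif_neg this]

def gam (x : X) (i : ℕ) : Coprod (FreeGroup (EL n s)) (FreeGroup (ER n s)) :=
  if h : i < n + 1 then el (lab n s (x, ⟨i, h⟩)) else 1

theorem exists_init [Group A] [Group B] (φ : FreeGroup X →* Coprod A B)
    (hs : ∀ x, pre (fun i => el (s x i)) (n + 1) = φ (FreeGroup.of x)) :
    Nonempty (St φ (X × Fin n)) := by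
  let α : FreeGroup (EL n s) →* A := FreeGroup.lift fun p => (s p.1.1 p.1.2).getLeft p.2
  let β : FreeGroup (ER n s) →* B := FreeGroup.lift fun p => (s p.1.1 p.1.2).getRight p.2
  have hlab : ∀ p : X × Fin (n + 1), Coprod.map α β (el (lab n s p)) = el (s p.1 p.2) := by
    intro p
    by_cases h : (s p.1 p.2).isLeft = true
    · have := lab_left n s ⟨p, h⟩
      simp only at this
      rw [this]
      simp only [el, Sum.elim_inl, Coprod.map_apply_inl, α, FreeGroup.lift_apply_of]
      conv_rhs => rw [← Sum.inl_getLeft _ h]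
      rfl
    · have h' : (s p.1 p.2).isRight = true := by simpa using h
      have := lab_right n s ⟨p, h'⟩
      simp only at this
      rw [this]
      simp only [el, Sum.elim_inr, Coprod.map_apply_inr, β, FreeGroup.lift_apply_of]
      conv_rhs => rw [← Sum.inr_getRight _ h']
      rfl
  let ε : Coprod (FreeGroup X) (FreeGroup (X × Fin n)) →*
      Coprod (FreeGroup (EL n s)) (FreeGroup (ER n s)) :=
    Coprod.lift (FreeGroup.lift fun x => pre (gam n s x) (n + 1))
      (FreeGroup.lift fun p => pre (gam n s p.1) (p.2 + 1))
  let dd : X × Fin (n + 1) → Coprod (FreeGroup X) (FreeGroup (X × Fin n)) :=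
    fun p => (ver X n p.1 p.2)⁻¹ * ver X n p.1 (p.2 + 1)
  let δ : Coprod (FreeGroup (EL n s)) (FreeGroup (ER n s)) →*
      Coprod (FreeGroup X) (FreeGroup (X × Fin n)) :=
    Coprod.lift (FreeGroup.lift fun p => dd p.1) (FreeGroup.lift fun p => dd p.1)
  have hδlab : ∀ p, δ (el (lab n s p)) = dd p := by
    intro p
    by_cases h : (s p.1 p.2).isLeft = true
    · have := lab_left n s ⟨p, h⟩
      simp only at this
      rw [this]; simp [δ]
    · have h' : (s p.1 p.2).isRight = true := by simpa using h
      have := lab_right n s ⟨p, h'⟩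
      simp only at this
      rw [this]; simp [δ]
  have hδ : ∀ x i, i ≤ n + 1 → δ (pre (gam n s x) i) = ver X n x i := by
    intro x i hi
    induction i with
    | zero => simp [pre, ver]
    | succ i ih =>
      rw [pre, map_mul, ih (by omega), gam, dif_pos (by omega), hδlab]
      simp [dd]
  have hε : ∀ x i, i ≤ n + 1 → ε (ver X n x i) = pre (gam n s x) i := by
    intro x i hi
    rcases i with _ | i
    · simp [ver, pre]
    · by_cases h : i < n
      · simp [ver, h, ε]
      · have : i = n := by omega
        subst this
        simp [ver, ε]
  have hεdd : ∀ p, ε (dd p) = el (lab n s p) := by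
    rintro ⟨x, i⟩
    simp only [dd, map_mul, map_inv]
    rw [hε x i (by omega), hε x (i + 1) (by omega), pre, gam, dif_pos i.2]
    simp
  let e : Coprod (FreeGroup X) (FreeGroup (X × Fin n)) ≃*
      Coprod (FreeGroup (EL n s)) (FreeGroup (ER n s)) :=
    MonoidHom.toMulEquiv ε δ (by
      apply Coprod.hom_ext
      · apply FreeGroup.ext_hom
        intro x
        have : ε (Coprod.inl (FreeGroup.of x)) = pre (gam n s x) (n + 1) := by simp [ε]
        simp only [MonoidHom.comp_apply, this, hδ x (n + 1) le_rfl]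
        simp [ver]
      · apply FreeGroup.ext_hom
        rintro ⟨x, i⟩
        have : ε (Coprod.inr (FreeGroup.of (x, i))) = pre (gam n s x) (i + 1) := by simp [ε]
        simp only [MonoidHom.comp_apply, this, hδ x (i + 1) (by omega)]
        simp [ver]) (by
      apply Coprod.hom_ext
      · apply FreeGroup.ext_hom
        intro p
        have h1 := hεdd p.1
        rw [lab_left] at h1
        simpa [δ] using h1
      · apply FreeGroup.ext_hom
        intro p
        have h1 := hεdd p.1
        rw [lab_right] at h1
        simpa [δ] using h1)
  have he : ∀ x, e x = ε x := fun _ => rfl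
  have hverS : ∀ x i, ver X n x i ∈ SK (FreeGroup X) (X × Fin n) := by
    intro x i
    rcases i with _ | i
    · exact one_mem_SK
    · by_cases h : i < n
      · exact ⟨1, some (x, ⟨i, h⟩), by simp [ver, h, vert]⟩
      · exact ⟨FreeGroup.of x, none, by simp [ver, h, vert]⟩
  have hR : ∀ x i, i ≤ n + 1 → Relation.ReflTransGen (Adj e) 1 (ver X n x i) := by
    intro x i hi
    induction i with
    | zero => exact Relation.ReflTransGen.refl
    | succ i ih =>
      refine Relation.ReflTransGen.tail (ih (by omega)) ⟨hverS _ _, hverS _ _,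
        lab n s (x, ⟨i, by omega⟩), ?_⟩
      rw [he, he, hε _ _ hi, hε _ _ (by omega), pre, gam, dif_pos (by omega)]
  have hF : ∀ g : FreeGroup X, Relation.ReflTransGen (Adj e) 1 (Coprod.inl g) := by
    intro g
    have hinv : ∀ g : FreeGroup X, Relation.ReflTransGen (Adj e) 1 (Coprod.inl g) →
        Relation.ReflTransGen (Adj e) 1 (Coprod.inl g⁻¹) := by
      intro g h
      have := Reach_trans e g⁻¹ (Reach_symm e h)
      rw [← map_mul] at this
      simpa using this
    have hof : ∀ x, Relation.ReflTransGen (Adj e) 1 (Coprod.inl (FreeGroup.of x)) := by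
      intro x
      have := hR x (n + 1) le_rfl
      simpa [ver] using this
    induction g using FreeGroup.induction_on with
    | C1 => rw [map_one]
    | of x => exact hof x
    | inv_of x h => exact hinv _ (hof x)
    | mul a b ha hb =>
      refine Relation.ReflTransGen.trans ha ?_
      have := Reach_trans e a hb
      simpa using this
  refine ⟨{ P := _, Q := _, gP := inferInstance, gQ := inferInstance, α := α, β := β, e := e
            comm := ?_, conn := ?_ }⟩
  · intro g
    have : ((Coprod.map α β).comp e.toMonoidHom).comp Coprod.inl = φ := by
      apply FreeGroup.ext_hom
      intro x
      change Coprod.map α β (ε (Coprod.inl (FreeGroup.of x))) = _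
      have h1 : ε (Coprod.inl (FreeGroup.of x)) = pre (gam n s x) (n + 1) := by simp [ε]
      rw [h1, ← hs x]
      apply map_pre
      intro i hi
      rw [gam, dif_pos hi, hlab]
    exact DFunLike.congr_fun this g
  · rintro c ⟨g, v, hc⟩
    rw [hc]
    refine Relation.ReflTransGen.trans (hF g) ?_
    have hv : Relation.ReflTransGen (Adj e) 1 (vert v) := by
      rcases v with _ | ⟨x, i⟩
      · exact Relation.ReflTransGen.refl
      · have := hR x (i + 1) (by omega)
        simpa [ver, vert] using this
    have := Reach_trans e g hv
    simpa using this
end init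

theorem grushko {X A B : Type} [Finite X] [Group A] [Group B] (φ : FreeGroup X →* Coprod A B)
    (hφ : Function.Surjective φ) :
    ∃ (P Q : Type) (_ : Group P) (_ : Group Q) (α : P →* A) (β : Q →* B)
      (e : FreeGroup X ≃* Coprod P Q), ∀ g, Coprod.map α β (e g) = φ g := by
  obtain ⟨n, s, hs⟩ := exists_syllables φ
  obtain ⟨st⟩ := exists_init n s φ hs
  exact grushko_of_state hφ _ _ rfl st

end ORG


namespace ORG
open Monoid

/-- An invariant additive function on a normal subgroup takes on the normal closure of `s`
only integer multiples of its value at `s`. -/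
theorem inv_hom_mult {G V : Type} [Group G] [AddCommGroup V] (N : Subgroup G) (hN : N.Normal)
    (c : G → V) (h1 : ∀ x ∈ N, ∀ y ∈ N, c (x * y) = c x + c y)
    (h2 : ∀ g, ∀ x ∈ N, c (g * x * g⁻¹) = c x) (s : G) (hs : s ∈ N)
    (x : G) (hx : x ∈ Subgroup.normalClosure {s}) : ∃ k : ℤ, c x = k • c s := by
  have c1 : c 1 = 0 := by
    have := h1 1 N.one_mem 1 N.one_mem
    simpa using this
  let M : Subgroup G :=
    { carrier := {x | x ∈ N ∧ ∃ k : ℤ, c x = k • c s}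
      one_mem' := ⟨N.one_mem, 0, by simp [c1]⟩
      mul_mem' := by
        rintro a b ⟨ha, k, hk⟩ ⟨hb, l, hl⟩
        exact ⟨N.mul_mem ha hb, k + l, by rw [h1 a ha b hb, hk, hl, add_smul]⟩
      inv_mem' := by
        rintro a ⟨ha, k, hk⟩
        refine ⟨N.inv_mem ha, -k, ?_⟩
        have := h1 a ha a⁻¹ (N.inv_mem ha)
        rw [mul_inv_cancel, c1, hk] at this
        rw [neg_smul]
        exact (neg_eq_of_add_eq_zero_right this.symm).symm }
  have hM : M.Normal := ⟨by
    rintro a ⟨ha, k, hk⟩ g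
    exact ⟨hN.conj_mem a ha g, k, by rw [h2 g a ha, hk]⟩⟩
  have hle : Subgroup.normalClosure {s} ≤ M := by
    apply Subgroup.normalClosure_le_normal
    rintro y hy
    rw [Set.mem_singleton_iff] at hy
    subst hy
    exact ⟨hs, 1, by simp⟩
  exact (hle hx).2

theorem not_mem_pow {Y : Type} (p : FreeGroup Y) (hp : p ≠ 1) (n : ℕ) (hn : 1 < n) :
    p ∉ Subgroup.normalClosure {p ^ n} := by
  intro hmem
  have hpN : p ∈ Subgroup.normalClosure {p} := Subgroup.subset_normalClosure rfl
  obtain ⟨c, h1, h2, x, hx, hcx⟩ := exists_inv_hom (MonoidHom.id (FreeGroup Y))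
    Function.injective_id (Subgroup.normalClosure {p}) inferInstance (by
      intro h
      rw [h, Subgroup.mem_bot] at hpN
      exact hp hpN)
  have c1 : c 1 = 0 := by
    have := h1 1 (one_mem _) 1 (one_mem _)
    simpa using this
  have hpow : ∀ m : ℕ, c (p ^ m) = m * c p := by
    intro m
    induction m with
    | zero => simp [c1]
    | succ m ih =>
      rw [pow_succ, h1 _ (pow_mem hpN m) _ hpN, ih]
      push_cast
      ring
  obtain ⟨k, hk⟩ := inv_hom_mult _ inferInstance c h1 h2 p hpN x hx
  obtain ⟨l, hl⟩ := inv_hom_mult _ inferInstance c h1 h2 (p ^ n) (pow_mem hpN n) p hmem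
  have hcp : c p ≠ 0 := by
    intro h
    rw [h] at hk
    simp at hk
    exact hcx hk
  rw [hpow] at hl
  have h3 : (1 : ℚ) = l * n := by
    have : c p * (1 - l * n) = 0 := by
      rw [zsmul_eq_mul] at hl
      linear_combination hl
    rcases mul_eq_zero.1 this with h | h
    · exact absurd h hcp
    · linarith
  have h4 : (1 : ℤ) = l * n := by exact_mod_cast h3
  have h5 : (n : ℤ) ∣ 1 := ⟨l, by rw [h4]; ring⟩
  have := Int.le_of_dvd one_pos h5
  omega

theorem factor_injective {Y1 Y2 A B : Type} [Group A] [Group B] (α : FreeGroup Y1 →* A)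
    (β : FreeGroup Y2 →* B) (s : Coprod (FreeGroup Y1) (FreeGroup Y2))
    (hk : (Coprod.map α β).ker = Subgroup.normalClosure {s}) :
    Function.Injective α ∨ Function.Injective β := by
  by_contra hcon
  rw [not_or] at hcon
  obtain ⟨hα, hβ⟩ := hcon
  obtain ⟨c, h1, h2, x, hx, hcx⟩ := exists_inv_hom (MonoidHom.id (FreeGroup Y1))
    Function.injective_id α.ker inferInstance (fun h => hα ((MonoidHom.ker_eq_bot_iff α).1 h))
  obtain ⟨d, g1, g2, y, hy, hdy⟩ := exists_inv_hom (MonoidHom.id (FreeGroup Y2))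
    Function.injective_id β.ker inferInstance (fun h => hβ ((MonoidHom.ker_eq_bot_iff β).1 h))
  have c1 : c 1 = 0 := by
    have := h1 1 (one_mem _) 1 (one_mem _)
    simpa using this
  have d1 : d 1 = 0 := by
    have := g1 1 (one_mem _) 1 (one_mem _)
    simpa using this
  have e1 : ∀ z, Coprod.fst (Coprod.map α β z) = α (Coprod.fst z) := by
    intro z
    have : (Coprod.fst).comp (Coprod.map α β) = α.comp Coprod.fst := by
      apply Coprod.hom_ext <;> ext <;> simp
    exact DFunLike.congr_fun this z
  have e2 : ∀ z, Coprod.snd (Coprod.map α β z) = β (Coprod.snd z) := by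
    intro z
    have : (Coprod.snd).comp (Coprod.map α β) = β.comp Coprod.snd := by
      apply Coprod.hom_ext <;> ext <;> simp
    exact DFunLike.congr_fun this z
  have f1 : ∀ z ∈ (Coprod.map α β).ker, Coprod.fst z ∈ α.ker := by
    intro z hz
    rw [MonoidHom.mem_ker] at hz ⊢
    rw [← e1, hz, map_one]
  have f2 : ∀ z ∈ (Coprod.map α β).ker, Coprod.snd z ∈ β.ker := by
    intro z hz
    rw [MonoidHom.mem_ker] at hz ⊢
    rw [← e2, hz, map_one]
  have key := inv_hom_mult (V := ℚ × ℚ) (Coprod.map α β).ker inferInstance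
    (fun z => (c (Coprod.fst z), d (Coprod.snd z)))
    (fun z hz w hw => by
      simp only [map_mul, Prod.mk_add_mk]
      rw [h1 _ (f1 z hz) _ (f1 w hw), g1 _ (f2 z hz) _ (f2 w hw)])
    (fun g z hz => by
      simp only [map_mul, map_inv]
      rw [h2 _ _ (f1 z hz), g2 _ _ (f2 z hz)])
    s (by rw [hk]; exact Subgroup.subset_normalClosure rfl)
  obtain ⟨k, hkk⟩ := key (Coprod.inl x) (by
    rw [← hk, MonoidHom.mem_ker, Coprod.map_apply_inl, MonoidHom.mem_ker.1 hx, map_one])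
  obtain ⟨l, hll⟩ := key (Coprod.inr y) (by
    rw [← hk, MonoidHom.mem_ker, Coprod.map_apply_inr, MonoidHom.mem_ker.1 hy, map_one])
  simp only [Coprod.fst_apply_inl, Coprod.snd_apply_inl, Coprod.fst_apply_inr,
    Coprod.snd_apply_inr, Prod.smul_mk, Prod.mk.injEq, zsmul_eq_mul, c1, d1] at hkk hll
  obtain ⟨a1, a2⟩ := hkk
  obtain ⟨b1, b2⟩ := hll
  rcases mul_eq_zero.1 a2.symm with h | h
  · rw [h] at a1
    simp at a1
    exact hcx a1
  · rw [h] at b2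
    simp at b2
    exact hdy b2

theorem grushko_free {X A B : Type} [Finite X] [Group A] [Group B]
    (φ : FreeGroup X →* Coprod A B) (hφ : Function.Surjective φ) :
    ∃ (Y1 Y2 : Type) (α : FreeGroup Y1 →* A) (β : FreeGroup Y2 →* B)
      (e : FreeGroup X ≃* Coprod (FreeGroup Y1) (FreeGroup Y2)),
      ∀ g, Coprod.map α β (e g) = φ g := by
  obtain ⟨P, Q, gP, gQ, α, β, e, he⟩ := grushko φ hφ
  have i1 : Function.Injective (e.symm.toMonoidHom.comp (Coprod.inl : P →* Coprod P Q)) :=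
    e.symm.injective.comp Coprod.inl_injective
  have i2 : Function.Injective (e.symm.toMonoidHom.comp (Coprod.inr : Q →* Coprod P Q)) :=
    e.symm.injective.comp Coprod.inr_injective
  let u1 := (MonoidHom.ofInjective i1).trans (IsFreeGroup.toFreeGroup _)
  let u2 := (MonoidHom.ofInjective i2).trans (IsFreeGroup.toFreeGroup _)
  refine ⟨_, _, α.comp u1.symm.toMonoidHom, β.comp u2.symm.toMonoidHom,
    e.trans (MulEquiv.coprodCongr u1 u2), ?_⟩
  intro g
  rw [← he]
  have : (Coprod.map (α.comp u1.symm.toMonoidHom) (β.comp u2.symm.toMonoidHom)).comp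
      (MulEquiv.coprodCongr u1 u2).toMonoidHom = Coprod.map α β := by
    apply Coprod.hom_ext
    · ext x
      change Coprod.map _ _ (Coprod.map u1.toMonoidHom u2.toMonoidHom (Coprod.inl x)) =
        Coprod.map α β (Coprod.inl x)
      rw [Coprod.map_apply_inl, Coprod.map_apply_inl, Coprod.map_apply_inl]
      exact congrArg (fun t => Coprod.inl (α t)) (u1.symm_apply_apply x)
    · ext x
      change Coprod.map _ _ (Coprod.map u1.toMonoidHom u2.toMonoidHom (Coprod.inr x)) =
        Coprod.map α β (Coprod.inr x)
      rw [Coprod.map_apply_inr, Coprod.map_apply_inr, Coprod.map_apply_inr]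
      exact congrArg (fun t => Coprod.inr (β t)) (u2.symm_apply_apply x)
  exact DFunLike.congr_fun this (e g)

end ORG


namespace ORG
open Monoid

/-- The free product of two free groups is the free group on the disjoint union. -/
def coprodFree (Y1 Y2 : Type) :
    Coprod (FreeGroup Y1) (FreeGroup Y2) ≃* FreeGroup (Y1 ⊕ Y2) :=
  MonoidHom.toMulEquiv
    (Coprod.lift (FreeGroup.map Sum.inl) (FreeGroup.map Sum.inr))
    (FreeGroup.lift (Sum.elim (fun y => Coprod.inl (FreeGroup.of y))
      (fun y => Coprod.inr (FreeGroup.of y))))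
    (by
      apply Coprod.hom_ext
      · apply FreeGroup.ext_hom
        intro a
        simp
      · apply FreeGroup.ext_hom
        intro a
        simp)
    (by
      apply FreeGroup.ext_hom
      rintro (a | a) <;> simp)

theorem coprodFree_inl (Y1 Y2 : Type) (u : FreeGroup Y1) :
    coprodFree Y1 Y2 (Coprod.inl u) = FreeGroup.map Sum.inl u := by
  change Coprod.lift (FreeGroup.map Sum.inl) (FreeGroup.map Sum.inr) (Coprod.inl u) = _
  rw [Coprod.lift_apply_inl]

theorem normalClosure_one {G : Type} [Group G] {s : G}
    (h : s ∈ Subgroup.normalClosure {(1 : G)}) : s = 1 := by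
  have : Subgroup.normalClosure {(1 : G)} ≤ ⊥ :=
    Subgroup.normalClosure_le_normal (by simp)
  exact Subgroup.mem_bot.1 (this h)

theorem map_surj_left {P Q A B : Type} [Group P] [Group Q] [Group A] [Group B]
    (α : P →* A) (β : Q →* B) (h : Function.Surjective (Coprod.map α β)) :
    Function.Surjective α := by
  intro a
  obtain ⟨z, hz⟩ := h (Coprod.inl a)
  refine ⟨Coprod.fst z, ?_⟩
  have : (Coprod.fst).comp (Coprod.map α β) = α.comp Coprod.fst := by
    apply Coprod.hom_ext <;> ext <;> simp
  have h2 := DFunLike.congr_fun this z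
  simp only [MonoidHom.comp_apply] at h2
  rw [← h2, hz, Coprod.fst_apply_inl]

theorem map_surj_right {P Q A B : Type} [Group P] [Group Q] [Group A] [Group B]
    (α : P →* A) (β : Q →* B) (h : Function.Surjective (Coprod.map α β)) :
    Function.Surjective β := by
  intro a
  obtain ⟨z, hz⟩ := h (Coprod.inr a)
  refine ⟨Coprod.snd z, ?_⟩
  have : (Coprod.snd).comp (Coprod.map α β) = β.comp Coprod.snd := by
    apply Coprod.hom_ext <;> ext <;> simp
  have h2 := DFunLike.congr_fun this z
  simp only [MonoidHom.comp_apply] at h2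
  rw [← h2, hz, Coprod.snd_apply_inr]

theorem map_inj {P Q A B : Type} [Group P] [Group Q] [Group A] [Group B]
    (α : P →* A) (β : Q →* B) (hα : Function.Bijective α) (hβ : Function.Bijective β) :
    Function.Injective (Coprod.map α β) := by
  let a := MulEquiv.ofBijective α hα
  let b := MulEquiv.ofBijective β hβ
  have : (Coprod.map a.symm.toMonoidHom b.symm.toMonoidHom).comp (Coprod.map α β) =
      MonoidHom.id _ := by
    apply Coprod.hom_ext
    · ext x
      change Coprod.map _ _ (Coprod.map α β (Coprod.inl x)) = Coprod.inl x
      rw [Coprod.map_apply_inl, Coprod.map_apply_inl]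
      exact congrArg Coprod.inl (a.symm_apply_apply x)
    · ext x
      change Coprod.map _ _ (Coprod.map α β (Coprod.inr x)) = Coprod.inr x
      rw [Coprod.map_apply_inr, Coprod.map_apply_inr]
      exact congrArg Coprod.inr (b.symm_apply_apply x)
  intro x y hxy
  have hx := DFunLike.congr_fun this x
  have hy := DFunLike.congr_fun this y
  simp only [MonoidHom.comp_apply, MonoidHom.id_apply] at hx hy
  rw [← hx, ← hy, hxy]

theorem conj_of_ker {Y1 Y2 A B : Type} [Group A] [Group B] (α : FreeGroup Y1 →* A)
    (β : FreeGroup Y2 →* B) (r s : Coprod (FreeGroup Y1) (FreeGroup Y2))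
    (hsurj : Function.Surjective (Coprod.map α β)) (hβ : Function.Injective β)
    (hk : (Coprod.map α β).ker = Subgroup.normalClosure {s}) (hs : s ≠ 1)
    (hsr : s ∈ Subgroup.normalClosure {r}) :
    ∃ (p : FreeGroup Y1) (g : Coprod (FreeGroup Y1) (FreeGroup Y2)),
      p ≠ 1 ∧ r = g * Coprod.inl p * g⁻¹ := by
  have hα : ¬ Function.Injective α := by
    intro hα
    have hinj := map_inj α β ⟨hα, map_surj_left α β hsurj⟩ ⟨hβ, map_surj_right α β hsurj⟩
    apply hs
    have : s ∈ (Coprod.map α β).ker := by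
      rw [hk]; exact Subgroup.subset_normalClosure rfl
    rw [MonoidHom.mem_ker] at this
    exact hinj (by rw [this, map_one])
  have : ∃ p0, α p0 = 1 ∧ p0 ≠ 1 := by
    by_contra hcon
    push Not at hcon
    exact hα ((injective_iff_map_eq_one α).2 hcon)
  obtain ⟨p0, hp0, hp1⟩ := this
  have hmem : Coprod.inl p0 ∈ Subgroup.normalClosure {r} := by
    have h1 : Coprod.inl p0 ∈ Subgroup.normalClosure {s} := by
      rw [← hk, MonoidHom.mem_ker, Coprod.map_apply_inl, hp0, map_one]
    refine (Subgroup.normalClosure_le_normal ?_) h1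
    rintro y hy
    rw [Set.mem_singleton_iff] at hy
    subst hy
    exact hsr
  have hE := map_mem_normalClosure (coprodFree Y1 Y2).toMonoidHom hmem
  have hE' : FreeGroup.map Sum.inl p0 ∈ Subgroup.normalClosure {coprodFree Y1 Y2 r} := by
    rw [← coprodFree_inl]; exact hE
  have hC : ConjIn (Sum.inl : Y1 → Y1 ⊕ Y2) (coprodFree Y1 Y2 r) := by
    by_contra hC
    exact hp1 (freiheitssatz Sum.inl Sum.inl_injective _ hC p0 hE')
  obtain ⟨g, u, hu⟩ := hC
  have hr : r = (coprodFree Y1 Y2).symm g * Coprod.inl u * ((coprodFree Y1 Y2).symm g)⁻¹ := by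
    apply (coprodFree Y1 Y2).injective
    rw [hu]
    simp [coprodFree_inl]
  refine ⟨u, _, ?_, hr⟩
  rintro rfl
  apply hs
  rw [map_one, mul_one, mul_inv_cancel] at hr
  rw [hr] at hsr
  exact normalClosure_one hsr

/-- The relator `R` is conjugate into a proper free factor, in a suitable free splitting. -/
def Adapted {X : Type} (R : FreeGroup X) : Prop :=
  ∃ (Y1 Y2 : Type) (e : FreeGroup X ≃* Coprod (FreeGroup Y1) (FreeGroup Y2)),
    Nonempty Y2 ∧ ∃ (p : FreeGroup Y1) (g : Coprod (FreeGroup Y1) (FreeGroup Y2)),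
      p ≠ 1 ∧ e R = g * Coprod.inl p * g⁻¹

theorem ker_transfer {F C D : Type} [Group F] [Group C] [Group D] (φ : F →* D) (S : F)
    (hk : φ.ker = Subgroup.normalClosure {S}) (m : C →* D) (e : F ≃* C)
    (he : ∀ g, m (e g) = φ g) : m.ker = Subgroup.normalClosure {e S} := by
  ext x
  constructor
  · intro hx
    have : e.symm x ∈ Subgroup.normalClosure {S} := by
      rw [← hk, MonoidHom.mem_ker, ← he, e.apply_symm_apply]
      exact hx
    have h2 := map_mem_normalClosure e.toMonoidHom this
    have h3 : e.toMonoidHom (e.symm x) = x := e.apply_symm_apply x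
    rw [h3] at h2
    exact h2
  · intro hx
    have h2 := map_mem_normalClosure e.symm.toMonoidHom hx
    have h3 : e.symm.toMonoidHom (e S) = S := e.symm_apply_apply S
    have h4 : e.symm.toMonoidHom x = e.symm x := rfl
    rw [h3, h4, ← hk, MonoidHom.mem_ker, ← he, e.apply_symm_apply] at h2
    exact h2

theorem adapted_half {X Y1 Y2 A B : Type} [Group A] [Group B] [Nontrivial B]
    (R S : FreeGroup X)
    (hS : S ≠ 1) (hSR : S ∈ Subgroup.normalClosure {R})
    (φ : FreeGroup X →* Coprod A B) (hφ : Function.Surjective φ)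
    (hk : φ.ker = Subgroup.normalClosure {S})
    (α : FreeGroup Y1 →* A) (β : FreeGroup Y2 →* B)
    (e : FreeGroup X ≃* Coprod (FreeGroup Y1) (FreeGroup Y2))
    (he : ∀ g, Coprod.map α β (e g) = φ g) (hβ : Function.Injective β) : Adapted R := by
  have hsurj : Function.Surjective (Coprod.map α β) := by
    intro d
    obtain ⟨g, hg⟩ := hφ d
    exact ⟨e g, by rw [he, hg]⟩
  refine ⟨Y1, Y2, e, ?_, ?_⟩
  · by_contra hY
    rw [not_nonempty_iff] at hY
    obtain ⟨b, hb⟩ := exists_ne (1 : B)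
    obtain ⟨q, hq⟩ := map_surj_right α β hsurj b
    have : q = 1 := Subsingleton.elim _ _
    rw [this, map_one] at hq
    exact hb hq.symm
  · refine conj_of_ker α β (e R) (e S) hsurj hβ (ker_transfer φ S hk _ e he) ?_ ?_
    · intro h
      exact hS (e.injective (by rw [h, map_one]))
    · exact map_mem_normalClosure e.toMonoidHom hSR

theorem adapted_of_coprod {X A B : Type} [Finite X] [Group A] [Group B] [Nontrivial A]
    [Nontrivial B] (R S : FreeGroup X)
    (hS : S ≠ 1) (hSR : S ∈ Subgroup.normalClosure {R})
    (φ : FreeGroup X →* Coprod A B) (hφ : Function.Surjective φ)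
    (hk : φ.ker = Subgroup.normalClosure {S}) : Adapted R := by
  obtain ⟨Y1, Y2, α, β, e, he⟩ := grushko_free φ hφ
  rcases factor_injective α β (e S) (ker_transfer φ S hk _ e he) with h | h
  · refine adapted_half R S hS hSR ((MulEquiv.coprodComm A B).toMonoidHom.comp φ)
      ((MulEquiv.coprodComm A B).surjective.comp hφ) ?_ β α
      (e.trans (MulEquiv.coprodComm _ _)) ?_ h
    · rw [← hk]
      ext x
      rw [MonoidHom.mem_ker, MonoidHom.mem_ker]
      exact (MulEquiv.coprodComm A B).map_eq_one_iff
    · intro g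
      have : (Coprod.map β α).comp (MulEquiv.coprodComm (FreeGroup Y1) (FreeGroup Y2)).toMonoidHom
          = (MulEquiv.coprodComm A B).toMonoidHom.comp (Coprod.map α β) := by
        change (Coprod.map β α).comp (Coprod.swap _ _) = (Coprod.swap _ _).comp (Coprod.map α β)
        apply Coprod.hom_ext <;> ext <;> simp
      have h2 := DFunLike.congr_fun this (e g)
      rw [MonoidHom.comp_apply, MonoidHom.comp_apply, he] at h2
      exact h2
  · exact adapted_half R S hS hSR φ hφ hk α β e he h

end ORG


namespace ORG
open Monoid

theorem nc_le {G : Type} [Group G] {a : G} {N : Subgroup G} (hN : N.Normal) (h : a ∈ N) :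
    Subgroup.normalClosure {a} ≤ N := by
  apply Subgroup.normalClosure_le_normal
  rintro y hy
  rw [Set.mem_singleton_iff] at hy
  subst hy
  exact h

theorem nc_self {G : Type} [Group G] (a : G) : a ∈ Subgroup.normalClosure {a} :=
  Subgroup.subset_normalClosure rfl

theorem nc_conj {G : Type} [Group G] (g a : G) :
    Subgroup.normalClosure {g * a * g⁻¹} = Subgroup.normalClosure {a} := by
  apply le_antisymm
  · exact nc_le inferInstance
      ((inferInstance : (Subgroup.normalClosure {a}).Normal).conj_mem a (nc_self a) g)
  · apply nc_le inferInstance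
    have := (inferInstance : (Subgroup.normalClosure {g * a * g⁻¹}).Normal).conj_mem _
      (nc_self (g * a * g⁻¹)) g⁻¹
    have h2 : g⁻¹ * (g * a * g⁻¹) * g⁻¹⁻¹ = a := by group
    rwa [h2] at this

theorem ker_map_mk {P Q : Type} [Group P] [Group Q] (q : P) :
    (Coprod.map (QuotientGroup.mk' (Subgroup.normalClosure {q})) (MonoidHom.id Q)).ker =
      Subgroup.normalClosure {(Coprod.inl q : Coprod P Q)} := by
  apply le_antisymm
  · let π := QuotientGroup.mk' (Subgroup.normalClosure {(Coprod.inl q : Coprod P Q)})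
    let δ : Coprod (P ⧸ Subgroup.normalClosure {q}) Q →*
        Coprod P Q ⧸ Subgroup.normalClosure {(Coprod.inl q : Coprod P Q)} :=
      Coprod.lift (QuotientGroup.lift _ (π.comp Coprod.inl) (nc_le inferInstance (by
        rw [MonoidHom.mem_ker]
        exact (QuotientGroup.eq_one_iff _).2 (nc_self _)))) (π.comp Coprod.inr)
    have hδ : δ.comp (Coprod.map (QuotientGroup.mk' (Subgroup.normalClosure {q}))
        (MonoidHom.id Q)) = π := by
      apply Coprod.hom_ext <;> ext <;> simp [δ]
    intro x hx
    have h := DFunLike.congr_fun hδ x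
    rw [MonoidHom.comp_apply, MonoidHom.mem_ker.1 hx, map_one] at h
    exact (QuotientGroup.eq_one_iff _).1 h.symm
  · apply nc_le inferInstance
    rw [MonoidHom.mem_ker, Coprod.map_apply_inl]
    have : QuotientGroup.mk' (Subgroup.normalClosure {q}) q = 1 :=
      (QuotientGroup.eq_one_iff _).2 (nc_self _)
    rw [this, map_one]

theorem equiv_of_ker {F A B : Type} [Group F] [Group A] [Group B] (f : F →* A) (g : F →* B)
    (hf : Function.Surjective f) (hg : Function.Surjective g) (h : f.ker = g.ker) :
    Nonempty (A ≃* B) :=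
  ⟨((QuotientGroup.quotientKerEquivOfSurjective f hf).symm.trans
    (QuotientGroup.quotientMulEquivOfEq h)).trans
    (QuotientGroup.quotientKerEquivOfSurjective g hg)⟩

theorem decomp_of_adapted {X Y1 Y2 H : Type} [Group H] (R : FreeGroup X)
    (e : FreeGroup X ≃* Coprod (FreeGroup Y1) (FreeGroup Y2)) (p : FreeGroup Y1)
    (g : Coprod (FreeGroup Y1) (FreeGroup Y2)) (he : e R = g * Coprod.inl p * g⁻¹) (k : ℕ)
    (π : FreeGroup X →* H) (hπ : Function.Surjective π)
    (hk : π.ker = Subgroup.normalClosure {R ^ k}) :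
    Nonempty (H ≃* Coprod (FreeGroup Y1 ⧸ Subgroup.normalClosure {p ^ k}) (FreeGroup Y2)) := by
  let m := Coprod.map (QuotientGroup.mk' (Subgroup.normalClosure {p ^ k}))
    (MonoidHom.id (FreeGroup Y2))
  have hm : Function.Surjective m := by
    intro z
    induction z using Coprod.induction_on with
    | inl a =>
      obtain ⟨b, rfl⟩ := QuotientGroup.mk'_surjective _ a
      exact ⟨Coprod.inl b, Coprod.map_apply_inl _ _ _⟩
    | inr a => exact ⟨Coprod.inr a, Coprod.map_apply_inr _ _ _⟩
    | mul a b ha hb =>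
      obtain ⟨a', rfl⟩ := ha
      obtain ⟨b', rfl⟩ := hb
      exact ⟨a' * b', map_mul _ _ _⟩
  have hχ := ker_transfer m (Coprod.inl (p ^ k)) (ker_map_mk (p ^ k)) (m.comp e.toMonoidHom)
    e.symm (fun z => congrArg m (e.apply_symm_apply z))
  refine equiv_of_ker π (m.comp e.toMonoidHom) hπ (hm.comp e.surjective) ?_
  rw [hk, hχ]
  have h1 : R = e.symm g * e.symm (Coprod.inl p) * (e.symm g)⁻¹ := by
    apply e.injective
    simp [he]
  rw [h1, conj_pow, nc_conj, map_pow, map_pow]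

/-- Splitting off one generator of a free group. -/
noncomputable def splitInv {X : Type} (x : X) :
    Coprod (FreeGroup {z : X // z = x}) (FreeGroup {z : X // ¬ z = x}) ≃* FreeGroup X :=
  letI := Classical.decPred (fun z : X => z = x)
  (coprodFree _ _).trans (FreeGroup.freeGroupCongr (Equiv.sumCompl (fun z : X => z = x)))

theorem splitInv_inl {X : Type} (x : X) (z : {z : X // z = x}) :
    splitInv x (Coprod.inl (FreeGroup.of z)) = FreeGroup.of z.1 := by
  simp [splitInv, coprodFree]

theorem splitInv_inr {X : Type} (x : X) (z : {z : X // ¬ z = x}) :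
    splitInv x (Coprod.inr (FreeGroup.of z)) = FreeGroup.of z.1 := by
  simp [splitInv, coprodFree]

/-- Elementary Nielsen transvection. -/
noncomputable def transvHom {X : Type} (a b : X) (ε : ℤ) : FreeGroup X →* FreeGroup X :=
  letI := Classical.decEq X
  FreeGroup.lift (fun z => if z = a then FreeGroup.of a * FreeGroup.of b ^ ε else FreeGroup.of z)

theorem transvHom_a {X : Type} (a b : X) (ε : ℤ) :
    transvHom a b ε (FreeGroup.of a) = FreeGroup.of a * FreeGroup.of b ^ ε := by
  simp [transvHom]

theorem transvHom_z {X : Type} (a b z : X) (h : z ≠ a) (ε : ℤ) :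
    transvHom a b ε (FreeGroup.of z) = FreeGroup.of z := by
  simp [transvHom, h]

theorem transvHom_comp {X : Type} (a b : X) (h : b ≠ a) (ε : ℤ) :
    (transvHom a b (-ε)).comp (transvHom a b ε) = MonoidHom.id _ := by
  apply FreeGroup.ext_hom
  intro z
  by_cases hz : z = a
  · subst hz
    rw [MonoidHom.comp_apply, transvHom_a, map_mul, map_zpow, transvHom_a, transvHom_z _ _ _ h]
    simp
  · rw [MonoidHom.comp_apply, transvHom_z _ _ _ hz, transvHom_z _ _ _ hz]
    rfl

/-- Elementary Nielsen transvection as an automorphism. -/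
noncomputable def transv {X : Type} (a b : X) (h : b ≠ a) (ε : ℤ) :
    FreeGroup X ≃* FreeGroup X :=
  MonoidHom.toMulEquiv (transvHom a b ε) (transvHom a b (-ε)) (transvHom_comp a b h ε)
    (by simpa using transvHom_comp a b h (-ε))

theorem euclid {X : Type} (x y : X) (hxy : x ≠ y) : ∀ (N : ℕ) (ψ : FreeGroup X →* Multiplicative ℤ),
    (Multiplicative.toAdd (ψ (FreeGroup.of x))).natAbs +
      (Multiplicative.toAdd (ψ (FreeGroup.of y))).natAbs ≤ N →
    ∃ σ : FreeGroup X ≃* FreeGroup X, ψ (σ (FreeGroup.of x)) = 1 := by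
  classical
  intro N
  induction N with
  | zero =>
    intro ψ h
    refine ⟨MulEquiv.refl _, ?_⟩
    have : (Multiplicative.toAdd (ψ (FreeGroup.of x))) = 0 := by omega
    exact toAdd_eq_zero.1 this
  | succ N ih =>
    intro ψ h
    by_cases hx : (Multiplicative.toAdd (ψ (FreeGroup.of x))) = 0
    · exact ⟨MulEquiv.refl _, toAdd_eq_zero.1 hx⟩
    by_cases hy : (Multiplicative.toAdd (ψ (FreeGroup.of y))) = 0
    · refine ⟨FreeGroup.freeGroupCongr (Equiv.swap x y), ?_⟩
      simpa using toAdd_eq_zero.1 hy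
    have step : ∀ a b (hab : b ≠ a) (ε : ℤ),
        (Multiplicative.toAdd (ψ (transv a b hab ε (FreeGroup.of x)))).natAbs +
        (Multiplicative.toAdd (ψ (transv a b hab ε (FreeGroup.of y)))).natAbs ≤ N →
        ∃ σ : FreeGroup X ≃* FreeGroup X, ψ (σ (FreeGroup.of x)) = 1 := by
      intro a b hab ε hle
      obtain ⟨σ, hσ⟩ := ih (ψ.comp (transv a b hab ε).toMonoidHom) hle
      exact ⟨σ.trans (transv a b hab ε), hσ⟩
    have ta : ∀ a b (hab : b ≠ a) (ε : ℤ), Multiplicative.toAdd (ψ (transv a b hab ε (FreeGroup.of a)))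
        = Multiplicative.toAdd (ψ (FreeGroup.of a)) +
          ε * Multiplicative.toAdd (ψ (FreeGroup.of b)) := by
      intro a b hab ε
      change Multiplicative.toAdd (ψ (transvHom a b ε (FreeGroup.of a))) = _
      rw [transvHom_a, map_mul, map_zpow, toAdd_mul, toAdd_zpow, smul_eq_mul]
    have tb : ∀ a b (hab : b ≠ a) (ε : ℤ), Multiplicative.toAdd (ψ (transv a b hab ε (FreeGroup.of b)))
        = Multiplicative.toAdd (ψ (FreeGroup.of b)) := by
      intro a b hab ε
      change Multiplicative.toAdd (ψ (transvHom a b ε (FreeGroup.of b))) = _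
      rw [transvHom_z _ _ _ hab]
    have : ∀ s t : ℤ, s ≠ 0 → t ≠ 0 → t.natAbs ≤ s.natAbs →
        ∃ ε : ℤ, (s + ε * t).natAbs < s.natAbs := by
      intro s t hs ht hle
      by_cases h : (s - t).natAbs < s.natAbs
      · exact ⟨-1, by rw [show s + -1 * t = s - t by ring]; exact h⟩
      · exact ⟨1, by rw [one_mul]; omega⟩
    rcases le_total (Multiplicative.toAdd (ψ (FreeGroup.of y))).natAbs
      (Multiplicative.toAdd (ψ (FreeGroup.of x))).natAbs with hle | hle
    · obtain ⟨ε, hε⟩ := this _ _ hx hy hle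
      apply step x y hxy.symm ε
      rw [ta, tb]
      omega
    · obtain ⟨ε, hε⟩ := this _ _ hy hx hle
      apply step y x hxy ε
      rw [ta, tb]
      omega

theorem adapted_of_cyclic {X : Type} [Nontrivial X] (R : FreeGroup X) (hR : R ≠ 1)
    (ψ : FreeGroup X →* Multiplicative ℤ) (hψ : Function.Surjective ψ)
    (hk : ψ.ker = Subgroup.normalClosure {R}) : Adapted R := by
  obtain ⟨x, y, hxy⟩ := exists_pair_ne X
  obtain ⟨σ, hσ⟩ := euclid x y hxy _ ψ le_rfl
  let α : FreeGroup {z : X // z = x} →* PUnit.{1} := 1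
  let β : FreeGroup {z : X // ¬ z = x} →* Multiplicative ℤ :=
    FreeGroup.lift (fun z => ψ (σ (FreeGroup.of z.1)))
  let e := σ.symm.trans (splitInv x).symm
  let φ : FreeGroup X →* Coprod PUnit.{1} (Multiplicative ℤ) := Coprod.inr.comp ψ
  have hφ : Function.Surjective φ := by
    intro z
    induction z using Coprod.induction_on with
    | inl a => exact ⟨1, by rw [map_one, Subsingleton.elim a 1, map_one]⟩
    | inr a =>
      obtain ⟨w, rfl⟩ := hψ a
      exact ⟨w, rfl⟩
    | mul a b ha hb =>
      obtain ⟨a', rfl⟩ := ha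
      obtain ⟨b', rfl⟩ := hb
      exact ⟨a' * b', map_mul _ _ _⟩
  have hkφ : φ.ker = Subgroup.normalClosure {R} := by
    rw [← hk]
    ext w
    rw [MonoidHom.mem_ker, MonoidHom.mem_ker]
    constructor
    · intro h
      apply Coprod.inr_injective (M := PUnit.{1})
      rw [map_one]
      exact h
    · intro h
      change Coprod.inr (ψ w) = 1
      rw [h, map_one]
  have hcomp : Coprod.map α β =
      φ.comp (σ.toMonoidHom.comp (splitInv x).toMonoidHom) := by
    apply Coprod.hom_ext
    · apply FreeGroup.ext_hom
      intro z
      change Coprod.map α β (Coprod.inl (FreeGroup.of z)) =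
        Coprod.inr (ψ (σ (splitInv x (Coprod.inl (FreeGroup.of z)))))
      rw [splitInv_inl, z.2, hσ, Coprod.map_apply_inl, map_one]
      exact (map_one (Coprod.inr : Multiplicative ℤ →* Coprod PUnit.{1} (Multiplicative ℤ))).symm
    · apply FreeGroup.ext_hom
      intro z
      change Coprod.map α β (Coprod.inr (FreeGroup.of z)) =
        Coprod.inr (ψ (σ (splitInv x (Coprod.inr (FreeGroup.of z)))))
      rw [splitInv_inr, Coprod.map_apply_inr, FreeGroup.lift_apply_of]
  have he : ∀ g, Coprod.map α β (e g) = φ g := by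
    intro g
    rw [hcomp]
    simp [e]
  have hβ : Function.Injective β := by
    rcases factor_injective α β (e R) (ker_transfer φ R hkφ _ e he) with h | h
    · exfalso
      have h1 : (FreeGroup.of (⟨x, rfl⟩ : {z : X // z = x})) = 1 := h (Subsingleton.elim _ _)
      exact FreeGroup.of_ne_one _ h1
    · exact h
  exact adapted_half R R hR (nc_self R) φ hφ hkφ α β e he hβ

end ORG

namespace ORG
open Monoid

theorem ker_hat {X : Type} (R : FreeGroup X) (n : ℕ) :
    ((QuotientGroup.mk' (Subgroup.normalClosure {PresentedGroup.mk {R ^ n} R})).comp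
      (PresentedGroup.mk {R ^ n})).ker = Subgroup.normalClosure {R} := by
  apply le_antisymm
  · intro x hx
    rw [MonoidHom.mem_ker] at hx
    have h1 : PresentedGroup.mk {R ^ n} x ∈
        Subgroup.normalClosure {PresentedGroup.mk {R ^ n} R} :=
      (QuotientGroup.eq_one_iff _).1 hx
    have h2 : Subgroup.normalClosure {PresentedGroup.mk {R ^ n} R} ≤
        (Subgroup.normalClosure {R}).map (PresentedGroup.mk {R ^ n}) := by
      apply nc_le
      · exact Subgroup.Normal.map inferInstance _ (PresentedGroup.mk_surjective _)
      · exact Subgroup.mem_map_of_mem _ (nc_self R)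
    obtain ⟨y, hy, hyx⟩ := h2 h1
    have h3 : PresentedGroup.mk {R ^ n} (y⁻¹ * x) = 1 := by
      rw [map_mul, map_inv, hyx, inv_mul_cancel]
    rw [PresentedGroup.mk_eq_one_iff] at h3
    have h4 : y⁻¹ * x ∈ Subgroup.normalClosure {R} :=
      nc_le inferInstance (pow_mem (nc_self R) n) h3
    have h5 := mul_mem hy h4
    rwa [mul_inv_cancel_left] at h5
  · apply nc_le inferInstance
    rw [MonoidHom.mem_ker]
    exact (QuotientGroup.eq_one_iff _).2 (nc_self _)

theorem ker_mk {X : Type} (S : FreeGroup X) :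
    (PresentedGroup.mk {S}).ker = Subgroup.normalClosure {S} := by
  ext x
  rw [MonoidHom.mem_ker, PresentedGroup.mk_eq_one_iff]

theorem ker_comp_equiv {F G H : Type} [Group F] [Group G] [Group H] (π : F →* G) (f : G ≃* H) :
    (f.toMonoidHom.comp π).ker = π.ker := by
  ext x
  rw [MonoidHom.mem_ker, MonoidHom.mem_ker]
  exact f.map_eq_one_iff

theorem decomposable_free {Y : Type} [Nontrivial Y] : FreelyDecomposable (FreeGroup Y) := by
  obtain ⟨x, y, hxy⟩ := exists_pair_ne Y
  have : Nonempty {z : Y // z = x} := ⟨⟨x, rfl⟩⟩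
  have : Nonempty {z : Y // ¬ z = x} := ⟨⟨y, hxy.symm⟩⟩
  exact ⟨FreeGroup {z : Y // z = x}, FreeGroup {z : Y // ¬ z = x}, inferInstance, inferInstance,
    inferInstance, inferInstance, ⟨(splitInv x).symm⟩⟩

theorem decomposable_of_equiv {G H : Type} [Group G] [Group H] (f : G ≃* H)
    (h : FreelyDecomposable H) : FreelyDecomposable G := by
  obtain ⟨A, B, gA, gB, hA, hB, ⟨e⟩⟩ := h
  exact ⟨A, B, gA, gB, hA, hB, ⟨f.trans e⟩⟩

theorem coprod_subsingleton {A B : Type} [Group A] [Group B] (h : Subsingleton A) :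
    Nonempty (Coprod A B ≃* B) := by
  have f : A ≃* PUnit.{1} :=
    MonoidHom.toMulEquiv 1 1 (by ext a; exact Subsingleton.elim _ _)
      (by ext a)
  exact ⟨(MulEquiv.coprodCongr f (MulEquiv.refl B)).trans (MulEquiv.punitCoprod B)⟩

theorem G_of_adapted {X G : Type} [Group G] (R : FreeGroup X) (n : ℕ) (hn : 1 < n)
    (h : Adapted R) (π : FreeGroup X →* G) (hπ : Function.Surjective π)
    (hk : π.ker = Subgroup.normalClosure {R ^ n}) : FreelyDecomposable G := by
  obtain ⟨Y1, Y2, e, hY, p, g, hp, he⟩ := h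
  refine ⟨FreeGroup Y1 ⧸ Subgroup.normalClosure {p ^ n}, FreeGroup Y2, inferInstance,
    inferInstance, ?_, inferInstance, decomp_of_adapted R e p g he n π hπ hk⟩
  refine ⟨⟨QuotientGroup.mk' _ p, 1, ?_⟩⟩
  intro h
  exact not_mem_pow p hp n hn ((QuotientGroup.eq_one_iff _).1 h)

theorem Ghat_of_adapted {X G : Type} [Group G] (R : FreeGroup X)
    (h : Adapted R) (π : FreeGroup X →* G) (hπ : Function.Surjective π)
    (hk : π.ker = Subgroup.normalClosure {R}) :
    Nonempty (G ≃* Multiplicative ℤ) ∨ FreelyDecomposable G := by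
  obtain ⟨Y1, Y2, e, hY, p, g, hp, he⟩ := h
  obtain ⟨f⟩ := decomp_of_adapted R e p g he 1 π hπ (by rw [pow_one]; exact hk)
  rcases subsingleton_or_nontrivial (FreeGroup Y1 ⧸ Subgroup.normalClosure {p ^ 1}) with hs | hs
  · obtain ⟨f2⟩ := coprod_subsingleton (B := FreeGroup Y2) hs
    rcases subsingleton_or_nontrivial Y2 with ht | ht
    · left
      obtain ⟨y⟩ := hY
      let _ : Unique Y2 := ⟨⟨y⟩, fun z => Subsingleton.elim _ _⟩
      exact ⟨(f.trans f2).trans FreeGroup.mulEquivIntOfUnique⟩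
    · right
      exact decomposable_of_equiv (f.trans f2) decomposable_free
  · right
    exact ⟨_, FreeGroup Y2, inferInstance, inferInstance, hs, inferInstance, ⟨f⟩⟩

theorem adapted_of_decomposable {X G : Type} [Finite X] [Group G] (R S : FreeGroup X)
    (hS : S ≠ 1) (hSR : S ∈ Subgroup.normalClosure {R}) (π : FreeGroup X →* G)
    (hπ : Function.Surjective π) (hk : π.ker = Subgroup.normalClosure {S})
    (h : FreelyDecomposable G) : Adapted R := by
  obtain ⟨A, B, gA, gB, hA, hB, ⟨f⟩⟩ := h
  exact adapted_of_coprod R S hS hSR (f.toMonoidHom.comp π) (f.surjective.comp hπ)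
    ((ker_comp_equiv π f).trans hk)

end ORG

/-- Let `G = ⟨X; Rⁿ⟩` be a one-relator group with torsion on a finite
generating set `X` (so `|X| > 1`, `n > 1`, and `R` is not a proper power), and let
`Ĝ = ⟨X; R⟩` be the quotient of `G` by the normal closure of the image of `R`.  Then
`G` is a free product of two nontrivial groups iff `Ĝ` is infinite cyclic or `Ĝ` is a
free product of two nontrivial groups. -/
theorem statement_0 {X : Type} [Finite X] [Nontrivial X] (R : FreeGroup X) (n : ℕ)
    (hn : 1 < n) (hR : ∀ (S : FreeGroup X) (k : ℕ), 1 ≤ k → R = S ^ k → k = 1) :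
    FreelyDecomposable (PresentedGroup {R ^ n}) ↔
      (Nonempty ((PresentedGroup {R ^ n} ⧸
            Subgroup.normalClosure {PresentedGroup.mk {R ^ n} R}) ≃* Multiplicative ℤ) ∨
        FreelyDecomposable (PresentedGroup {R ^ n} ⧸
            Subgroup.normalClosure {PresentedGroup.mk {R ^ n} R})) := by
  have hR1 : R ≠ 1 := by
    intro h
    have := hR 1 2 (by norm_num) (by rw [h, one_pow])
    omega
  have hRn : R ^ n ≠ 1 := by
    intro h
    exact hR1 ((pow_eq_one_iff_left (by omega)).1 h)
  have hsurj := (QuotientGroup.mk'_surjective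
    (Subgroup.normalClosure {PresentedGroup.mk {R ^ n} R})).comp
    (PresentedGroup.mk_surjective {R ^ n})
  constructor
  · intro h
    have hA := ORG.adapted_of_decomposable R (R ^ n) hRn (pow_mem (ORG.nc_self R) n)
      (PresentedGroup.mk {R ^ n}) (PresentedGroup.mk_surjective _) (ORG.ker_mk _) h
    exact ORG.Ghat_of_adapted R hA _ hsurj (ORG.ker_hat R n)
  · intro h
    have hA : ORG.Adapted R := by
      rcases h with ⟨⟨f⟩⟩ | h
      · exact ORG.adapted_of_cyclic R hR1 (f.toMonoidHom.comp _) (f.surjective.comp hsurj)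
          ((ORG.ker_comp_equiv _ f).trans (ORG.ker_hat R n))
      · exact ORG.adapted_of_decomposable R R hR1 (ORG.nc_self R) _ hsurj (ORG.ker_hat R n) h
    exact ORG.G_of_adapted R n hn hA (PresentedGroup.mk {R ^ n})
      (PresentedGroup.mk_surjective _) (ORG.ker_mk _)
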